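/- Let f be an orientation-preserving homeomorphism of ℝ² satisfying (P1) and (P2), with Fix(f) not compact, and let I be an adapted isotopy. Then for every finite Borel measure ν on ℝ² invariant under f, every free disc U for f, and every point z' ∈ Fix(f), one has ∫_{∪_{k≥0} f^k(U)} ρ_{z'}(z) dν(z) = ∫_U α_{U,z'}(z) dν(z), where ρ_{z'} is defined ν-almost everywhere on these sets. -/

import Mathlib

open MeasureTheory Filter Topology Set Metric

noncomputable section

attribute [local instance] Classical.propDecidable

/-- An isotopy (within homeomorphisms of `X`) from the identity to `f`,
parametrised by `t ∈ [0,1]` (the values for `t ∉ [0,1]` are irrelevant). -/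
structure HIsotopy {X : Type*} [TopologicalSpace X] (f : X ≃ₜ X) where
  F : ℝ → X ≃ₜ X
  cont : Continuous fun p : ℝ × X => F p.1 p.2
  cont_symm : Continuous fun p : ℝ × X => (F p.1).symm p.2
  zero : F 0 = Homeomorph.refl X
  one : F 1 = f

/-- The set of fixed points of a map. -/
def FixPts {X : Type*} (g : X → X) : Set X := {z | g z = z}

/-- The set of positively recurrent points of `f`. -/
def RecPlus (f : ℂ ≃ₜ ℂ) : Set ℂ :=
  {z | ∃ n : ℕ → ℕ, StrictMono n ∧ Tendsto (fun k => (⇑f)^[n k] z) atTop (𝓝 z)}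

/-- The total angular variation (number of turns around the origin, i.e. the
integral of the polar-angle form `dθ`) of a continuous path `[0,1] → ℂ ∖ {0}`,
defined via a continuous lift of the argument (junk value otherwise). -/
def angVar (γ : ℝ → ℂ) : ℝ :=
  if h : ∃ θ : ℝ → ℝ, ContinuousOn θ (Set.Icc 0 1) ∧
      ∀ t ∈ Set.Icc (0 : ℝ) 1, γ t = (‖γ t‖ : ℂ) * Complex.exp ((θ t : ℂ) * Complex.I)
  then (h.choose 1 - h.choose 0) / (2 * Real.pi)
  else 0

/-- `Enlace_I(z,z')`: the integral of `dθ` along `t ↦ f_t(z) - f_t(z')`. -/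
def Enlace {f : ℂ ≃ₜ ℂ} (I : HIsotopy f) (z z' : ℂ) : ℝ :=
  angVar fun t => I.F t z - I.F t z'

/-- `Tourne_I(z)`: the integral of `dθ` along `t ↦ f_t(z)`. -/
def Tourne {f : ℂ ≃ₜ ℂ} (I : HIsotopy f) (z : ℂ) : ℝ :=
  angVar fun t => I.F t z

/-- Property (P1): `Enlace_I` is bounded on pairs of distinct fixed points. -/
def P1 {f : ℂ ≃ₜ ℂ} (I : HIsotopy f) : Prop :=
  ∃ M : ℝ, ∀ z ∈ FixPts ⇑f, ∀ z' ∈ FixPts ⇑f, z ≠ z' → |Enlace I z z'| ≤ M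

/-- Property (P2): `Tourne_I` is constant on the fixed points in a
neighbourhood of infinity (i.e. outside some compact set). -/
def P2 {f : ℂ ≃ₜ ℂ} (I : HIsotopy f) : Prop :=
  ∃ K : Set ℂ, IsCompact K ∧
    ∀ z ∈ FixPts ⇑f \ K, ∀ z' ∈ FixPts ⇑f \ K, Tourne I z = Tourne I z'

/-- An isotopy is adapted if `Tourne_I` vanishes on the fixed points in a
neighbourhood of infinity. -/
def Adapted {f : ℂ ≃ₜ ℂ} (I : HIsotopy f) : Prop :=
  ∃ K : Set ℂ, IsCompact K ∧ ∀ z ∈ FixPts ⇑f \ K, Tourne I z = 0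

/-- The orbit of `z` has rotation number `ρ` around `z'` (with respect to the
isotopy `I`): along every strictly increasing sequence of integers `(n k)` with
`f^[n k] z → z`, the Birkhoff averages of `Enlace I · z'` converge to `ρ`. -/
def HasRot {f : ℂ ≃ₜ ℂ} (I : HIsotopy f) (z' z : ℂ) (ρ : ℝ) : Prop :=
  ∀ n : ℕ → ℕ, StrictMono n → Tendsto (fun k => (⇑f)^[n k] z) atTop (𝓝 z) →
    Tendsto (fun k => (∑ r ∈ Finset.range (n k), Enlace I ((⇑f)^[r] z) z') / (n k : ℝ))
      atTop (𝓝 ρ)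

/-- The rotation number `ρ_{z'}(z)` as a function (junk value `0` if it is
not defined). -/
def rho {f : ℂ ≃ₜ ℂ} (I : HIsotopy f) (z' z : ℂ) : ℝ :=
  if h : ∃ ρ : ℝ, HasRot I z' z ρ then h.choose else 0

/-- A free disc for `f`: an open set homeomorphic to the plane and disjoint
from its image. -/
def FreeDisc (f : ℂ ≃ₜ ℂ) (U : Set ℂ) : Prop :=
  IsOpen U ∧ Nonempty (U ≃ₜ ℂ) ∧ Disjoint (⇑f '' U) U

/-- The first return time `τ_U(z)` to `U` (junk value `0` if the orbit never
returns). -/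
def retTime (f : ℂ ≃ₜ ℂ) (U : Set ℂ) (z : ℂ) : ℕ :=
  sInf {n : ℕ | 0 < n ∧ (⇑f)^[n] z ∈ U}

/-- `γ` is a path in `U` from `x` to `y` (parametrised by `[0,1]`). -/
def IsPathIn (U : Set ℂ) (x y : ℂ) (γ : ℝ → ℂ) : Prop :=
  ContinuousOn γ (Set.Icc 0 1) ∧ (∀ t ∈ Set.Icc (0 : ℝ) 1, γ t ∈ U) ∧ γ 0 = x ∧ γ 1 = y

/-- `α_{U,z'}(z) = Σ_{0 ≤ ℓ < τ_U(z)} Enlace_I(f^ℓ(z),z') + ∫_{γ_{U,z} - z'} dθ`,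
where `γ_{U,z}` is a path in `U` joining the first return `F_U(z)` to `z`. -/
def alphaU {f : ℂ ≃ₜ ℂ} (I : HIsotopy f) (U : Set ℂ) (z' z : ℂ) : ℝ :=
  (∑ ℓ ∈ Finset.range (retTime f U z), Enlace I ((⇑f)^[ℓ] z) z') +
    if h : ∃ γ : ℝ → ℂ, IsPathIn U ((⇑f)^[retTime f U z] z) z γ
    then angVar fun t => h.choose t - z' else 0

/-- `α̂_{U,R}(z) = sup { |α_{U,z'}(z)| : z' ∈ Fix(f), ‖z'‖ ≥ R }`. -/
def alphaHat {f : ℂ ≃ₜ ℂ} (I : HIsotopy f) (U : Set ℂ) (R : ℝ) (z : ℂ) : ℝ :=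
  sSup {a : ℝ | ∃ z' ∈ FixPts ⇑f, R ≤ ‖z'‖ ∧ a = |alphaU I U z' z|}

/-- The (closed) support of a measure. -/
def measSupport {X : Type*} [TopologicalSpace X] {m : MeasurableSpace X}
    (μ : Measure X) : Set X :=
  {x | ∀ U : Set X, IsOpen U → x ∈ U → μ U ≠ 0}

/-- The standard unit sphere `S² ⊂ ℝ³`. -/
notation "𝕊²" => Metric.sphere (0 : EuclideanSpace ℝ (Fin 3)) 1

instance : Fact (Module.finrank ℝ (EuclideanSpace ℝ (Fin 3)) = 3) :=
  ⟨finrank_euclideanSpace_fin⟩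

open Manifold in
/-- `g` is a `C¹` diffeomorphism of the standard sphere. -/
def IsC1SphereDiffeo (g : 𝕊² → 𝕊²) : Prop :=
  Function.Bijective g ∧ ContMDiff (𝓡 2) (𝓡 2) 1 g ∧
    ∃ g' : 𝕊² → 𝕊², Function.LeftInverse g' g ∧ Function.RightInverse g' g ∧
      ContMDiff (𝓡 2) (𝓡 2) 1 g'

/-- `f` extends to a `C¹` diffeomorphism of `S² = ℝ² ⊔ {∞}` for some smooth
structure on `S²`: transporting the extension of `f` to the one-point
compactification through some homeomorphism with the standard sphere yields a
`C¹` diffeomorphism. -/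
def ExtendsToC1SphereDiffeo (f : ℂ ≃ₜ ℂ) : Prop :=
  ∃ φ : OnePoint ℂ ≃ₜ 𝕊², IsC1SphereDiffeo fun x => φ (OnePoint.map (⇑f) (φ.symm x))

/-- The commutator loop `t ↦ [f₁^t, f₂^t] = f₁^t ∘ f₂^t ∘ (f₁^t)⁻¹ ∘ (f₂^t)⁻¹`. -/
def commLoop {X : Type*} [TopologicalSpace X] {f₁ f₂ : X ≃ₜ X}
    (I₁ : HIsotopy f₁) (I₂ : HIsotopy f₂) (t : ℝ) : X ≃ₜ X :=
  (I₂.F t).symm.trans ((I₁.F t).symm.trans ((I₂.F t).trans (I₁.F t)))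

/-- The invariant `W(f₁,f₂)` vanishes: for isotopies from the identity to
`f₁`, `f₂`, the commutator loop is null-homotopic (rel basepoint) in the group
of homeomorphisms. -/
def WVanishes {X : Type*} [TopologicalSpace X] (f₁ f₂ : X ≃ₜ X) : Prop :=
  ∃ (I₁ : HIsotopy f₁) (I₂ : HIsotopy f₂) (H : ℝ → ℝ → X ≃ₜ X),
    Continuous (fun p : (ℝ × ℝ) × X => H p.1.1 p.1.2 p.2) ∧
    Continuous (fun p : (ℝ × ℝ) × X => (H p.1.1 p.1.2).symm p.2) ∧
    (∀ t, H 0 t = commLoop I₁ I₂ t) ∧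
    (∀ t, H 1 t = Homeomorph.refl X) ∧
    (∀ s, H s 0 = Homeomorph.refl X) ∧
    (∀ s, H s 1 = Homeomorph.refl X)

/-- The shorter great-circle arc joining `p` to `z` on the unit sphere
(for `z` neither `p` nor its antipode): the points of the sphere which are
nonnegative linear combinations of `p` and `z`. -/
def minorArcS (p z : 𝕊²) : Set 𝕊² :=
  {x | ∃ a b : ℝ, 0 ≤ a ∧ 0 ≤ b ∧
    (x : EuclideanSpace ℝ (Fin 3)) =
      a • (p : EuclideanSpace ℝ (Fin 3)) + b • (z : EuclideanSpace ℝ (Fin 3))}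

/-- The longer great-circle arc joining `p` to `z` on the unit sphere. -/
def majorArcS (p z : 𝕊²) : Set 𝕊² :=
  {x | ∃ a b : ℝ, (a ≤ 0 ∨ b ≤ 0) ∧
    (x : EuclideanSpace ℝ (Fin 3)) =
      a • (p : EuclideanSpace ℝ (Fin 3)) + b • (z : EuclideanSpace ℝ (Fin 3))}


namespace Fr

theorem exists_log {A : Type*} [TopologicalSpace A] [SimplyConnectedSpace A]
    [LocallyPathConnectedSpace A] (g : A → ℂ) (hg : Continuous g) (h0 : ∀ a, g a ≠ 0)
    (a0 : A) (e0 : ℂ) (he : Complex.exp e0 = g a0) :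
    ∃ L : A → ℂ, Continuous L ∧ L a0 = e0 ∧ ∀ a, Complex.exp (L a) = g a := by
  obtain ⟨F, ⟨h1, h2⟩, -⟩ := Complex.isCoveringMap_exp.existsUnique_continuousMap_lifts
    (A := A) ⟨fun a => (⟨g a, h0 a⟩ : {z : ℂ // z ≠ 0}), by fun_prop⟩ a0 e0
    (Subtype.ext he)
  refine ⟨F, F.continuous, h1, fun a => ?_⟩
  have := congrFun h2 a
  exact congrArg Subtype.val this

theorem exists_log' {A : Type*} [TopologicalSpace A] [SimplyConnectedSpace A]
    [LocallyPathConnectedSpace A] (g : A → ℂ) (hg : Continuous g) (h0 : ∀ a, g a ≠ 0) :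
    ∃ L : A → ℂ, Continuous L ∧ ∀ a, Complex.exp (L a) = g a := by
  have a0 : A := Classical.choice inferInstance
  obtain ⟨L, h1, -, h2⟩ := exists_log g hg h0 a0 (Complex.log (g a0)) (Complex.exp_log (h0 a0))
  exact ⟨L, h1, h2⟩

theorem const_of_exp_eq {A : Type*} [TopologicalSpace A] {S : Set A} (hS : IsPreconnected S)
    {K L : A → ℂ} (hK : ContinuousOn K S) (hL : ContinuousOn L S)
    (h : ∀ x ∈ S, Complex.exp (K x) = Complex.exp (L x)) {x y : A} (hx : x ∈ S) (hy : y ∈ S) :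
    K x - L x = K y - L y := by
  have hintg : ∀ x ∈ S, ∃ n : ℤ, K x - L x = n * (2 * Real.pi * Complex.I) := by
    intro x hx
    obtain ⟨n, hn⟩ := Complex.exp_eq_exp_iff_exists_int.1 (h x hx)
    exact ⟨n, by rw [hn]; ring⟩
  let D : A → ℝ := fun x => (K x - L x).im / (2 * Real.pi)
  have hD : ContinuousOn D S :=
    (Complex.continuous_im.comp_continuousOn (hK.sub hL)).div_const _
  have hpi := Real.pi_pos
  have hDn : ∀ x ∈ S, ∃ n : ℤ, K x - L x = n * (2 * Real.pi * Complex.I) ∧ D x = n := by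
    intro x hx
    obtain ⟨n, hn⟩ := hintg x hx
    refine ⟨n, hn, ?_⟩
    simp only [D, hn]
    simp
  have key : ∀ x ∈ S, ∀ y ∈ S, ¬ D x < D y := by
    intro x hx y hy hlt
    obtain ⟨n, -, hn⟩ := hDn x hx
    obtain ⟨m, -, hm⟩ := hDn y hy
    have hnm : n < m := by rw [hn, hm] at hlt; exact_mod_cast hlt
    have hnm' : (n : ℝ) + 1 ≤ m := by exact_mod_cast hnm
    obtain ⟨c, hc, hc'⟩ := hS.intermediate_value hx hy hD
      (show (n : ℝ) + 1/2 ∈ Set.Icc (D x) (D y) by rw [hn, hm]; constructor <;> linarith)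
    obtain ⟨k, -, hk⟩ := hDn c hc
    rw [hk] at hc'
    have h1 : (2 * k : ℝ) = 2 * n + 1 := by linarith
    have h2 : 2 * k = 2 * n + 1 := by exact_mod_cast h1
    omega
  obtain ⟨n, hn', hn⟩ := hDn x hx
  obtain ⟨m, hm', hm⟩ := hDn y hy
  have : D x = D y := le_antisymm (not_lt.1 (key y hy x hx)) (not_lt.1 (key x hx y hy))
  rw [hn, hm] at this
  have : n = m := by exact_mod_cast this
  rw [hn', hm', this]

theorem angVar_eq {γ : ℝ → ℂ} {L : ℝ → ℂ} (hL : ContinuousOn L (Set.Icc 0 1))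
    (h : ∀ t ∈ Set.Icc (0:ℝ) 1, Complex.exp (L t) = γ t) :
    angVar γ = (L 1 - L 0).im / (2 * Real.pi) := by
  have hne : ∀ t ∈ Set.Icc (0:ℝ) 1, γ t ≠ 0 := fun t ht => by
    rw [← h t ht]; exact Complex.exp_ne_zero _
  have hex : ∃ θ : ℝ → ℝ, ContinuousOn θ (Set.Icc 0 1) ∧
      ∀ t ∈ Set.Icc (0 : ℝ) 1, γ t = (‖γ t‖ : ℂ) * Complex.exp ((θ t : ℂ) * Complex.I) := by
    refine ⟨fun t => (L t).im, Complex.continuous_im.comp_continuousOn hL, fun t ht => ?_⟩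
    rw [← h t ht, Complex.norm_exp, Complex.ofReal_exp, ← Complex.exp_add, Complex.re_add_im]
  have hγ : ContinuousOn γ (Set.Icc 0 1) :=
    (Complex.continuous_exp.comp_continuousOn hL).congr fun t ht => (h t ht).symm
  unfold angVar
  rw [dif_pos hex]
  obtain ⟨h1, h2⟩ := hex.choose_spec
  set θ := hex.choose
  have := const_of_exp_eq (S := Set.Icc (0:ℝ) 1) isPreconnected_Icc (K := L)
    (L := fun t => ((Real.log ‖γ t‖ : ℝ) : ℂ) + (θ t : ℂ) * Complex.I) hL
    (by
      refine ContinuousOn.add ?_ ?_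
      · refine Complex.continuous_ofReal.comp_continuousOn (ContinuousOn.log hγ.norm ?_)
        intro t ht; exact norm_ne_zero_iff.2 (hne t ht)
      · exact (Complex.continuous_ofReal.comp_continuousOn h1).mul continuousOn_const)
    (by
      intro t ht
      rw [h t ht, Complex.exp_add, ← Complex.ofReal_exp, Real.exp_log
        (norm_pos_iff.2 (hne t ht)), ← h2 t ht])
    (x := 1) (y := 0) (by simp) (by simp)
  have him := congrArg Complex.im this
  simp at him
  simp only [Complex.sub_im]
  congr 1
  linarith

/-- homeomorphisms isotopic to the identity -/
def Iso (h : ℂ ≃ₜ ℂ) : Prop :=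
  ∃ F : ℝ → ℂ → ℂ, Continuous (fun p : ℝ × ℂ => F p.1 p.2) ∧
    (∀ t, Function.Injective (F t)) ∧ (∀ z, F 0 z = z) ∧ (∀ z, F 1 z = h z)

theorem Iso.refl : Iso (Homeomorph.refl ℂ) :=
  ⟨fun _ z => z, continuous_snd, fun _ => Function.injective_id, fun _ => rfl, fun _ => rfl⟩

theorem Iso.trans {g h : ℂ ≃ₜ ℂ} (hg : Iso g) (hh : Iso h) : Iso (g.trans h) := by
  obtain ⟨G, g1, g2, g3, g4⟩ := hg
  obtain ⟨H, h1, h2, h3, h4⟩ := hh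
  refine ⟨fun t z => H t (G t z), ?_, fun t => (h2 t).comp (g2 t), ?_, ?_⟩
  · exact h1.comp (continuous_fst.prodMk g1)
  · intro z; simp [g3, h3]
  · intro z; simp [g4, h4]

theorem Iso.symm {h : ℂ ≃ₜ ℂ} (hh : Iso h) : Iso h.symm := by
  obtain ⟨H, h1, h2, h3, h4⟩ := hh
  refine ⟨fun t z => H (1 - t) (h.symm z), ?_, fun t => (h2 _).comp h.symm.injective, ?_, ?_⟩
  · exact h1.comp ((continuous_const.sub continuous_fst).prodMk
      (h.symm.continuous.comp continuous_snd))
  · intro z; simp [h4]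
  · intro z; simp [h3]

/-- Poincare-Miranda on a rectangle centered at 0. -/
theorem miranda (Φ : ℂ → ℂ) (hΦ : Continuous Φ) (R S : ℝ) (hR : 0 < R) (hS : 0 < S)
    (hr : ∀ y, 0 < (Φ ⟨R, y⟩).re) (hl : ∀ y, (Φ ⟨-R, y⟩).re < 0)
    (ht : ∀ x, |x| ≤ R → 0 < (Φ ⟨x, S⟩).im) (hb : ∀ x, |x| ≤ R → (Φ ⟨x, -S⟩).im < 0) :
    ∃ w, Φ w = 0 := by
  by_contra hcon
  push Not at hcon
  obtain ⟨L, hL, hLe⟩ := exists_log' Φ hΦ hcon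
  have side : ∀ (c : ℂ) (hc : c ≠ 0) (γ : ℝ → ℂ) (hγ : Continuous γ) (a : ℝ)
      (hpos : ∀ t, |t| ≤ a → 0 < (c * Φ (γ t)).re) (s t : ℝ) (hs : |s| ≤ a) (ht : |t| ≤ a),
      L (γ s) - Complex.log (c * Φ (γ s)) = L (γ t) - Complex.log (c * Φ (γ t)) := by
    intro c hc γ hγ a hpos s t hs ht
    obtain ⟨d, hd⟩ : ∃ d, Complex.exp d = c := ⟨Complex.log c, Complex.exp_log hc⟩
    have hmem : ∀ t, t ∈ Set.Icc (-a) a ↔ |t| ≤ a := fun t => by rw [abs_le]; rfl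
    have := const_of_exp_eq (S := Set.Icc (-a) a) isPreconnected_Icc
      (K := fun t => L (γ t)) (L := fun t => Complex.log (c * Φ (γ t)) - d)
      (hL.comp hγ).continuousOn
      (by
        refine ContinuousOn.sub (ContinuousOn.clog ?_ ?_) continuousOn_const
        · exact (continuous_const.mul (hΦ.comp hγ)).continuousOn
        · intro t ht; left; exact hpos t ((hmem t).1 ht))
      (by
        intro t _
        rw [hLe, Complex.exp_sub, Complex.exp_log (mul_ne_zero hc (hcon _)), hd]
        field_simp)
      (x := s) (y := t) ((hmem s).2 hs) ((hmem t).2 ht)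
    linear_combination this
  have hmk : ∀ x y : ℝ, (⟨x, y⟩ : ℂ) = x + y * Complex.I := fun x y => Complex.mk_eq_add_mul_I x y
  have e1 := side 1 one_ne_zero (fun y => ⟨R, y⟩) (by simp only [hmk]; fun_prop) S
    (fun y _ => by simpa using hr y) S (-S) (by rw [abs_of_pos hS]) (by rw [abs_neg, abs_of_pos hS])
  have e2 := side (-Complex.I) (by simp) (fun x => ⟨x, S⟩) (by simp only [hmk]; fun_prop) R
    (fun x hx => by simpa using ht x hx) R (-R) (by rw [abs_of_pos hR])
      (by rw [abs_neg, abs_of_pos hR])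
  have e3 := side (-1) (by simp) (fun y => ⟨-R, y⟩) (by simp only [hmk]; fun_prop) S
    (fun y _ => by simpa using hl y) S (-S) (by rw [abs_of_pos hS]) (by rw [abs_neg, abs_of_pos hS])
  have e4 := side (Complex.I) (by simp) (fun x => ⟨x, -S⟩) (by simp only [hmk]; fun_prop) R
    (fun x hx => by simpa using hb x hx) R (-R) (by rw [abs_of_pos hR])
      (by rw [abs_neg, abs_of_pos hR])
  -- quarter turn
  have q : ∀ w : ℂ, 0 < w.re → 0 < w.im →
      Complex.log w - Complex.log (-Complex.I * w) = Real.pi / 2 * Complex.I := by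
    intro w h1 h2
    have hw : w ≠ 0 := by rintro rfl; simp at h1
    have ha := Complex.abs_arg_lt_pi_div_two_iff.2 (Or.inl h1)
    have hb : 0 ≤ w.arg := Complex.arg_nonneg_iff.2 h2.le
    have hp := Real.pi_pos
    rw [abs_lt] at ha
    rw [(Complex.log_mul_eq_add_log_iff (by simp) hw).2]
    · rw [Complex.log_neg_I]; ring
    · rw [Complex.arg_neg_I]; constructor <;> linarith
  have hRR : |R| ≤ R := by rw [abs_of_pos hR]
  have hRR' : |-R| ≤ R := by rw [abs_neg, abs_of_pos hR]
  have c1 := q (Φ ⟨R, S⟩) (hr S) (ht R hRR)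
  have c2 := q (-Complex.I * Φ ⟨-R, S⟩) (by simpa using ht (-R) hRR') (by simpa using hl S)
  have c3 := q (-1 * Φ ⟨-R, -S⟩) (by simpa using hl (-S)) (by simpa using hb (-R) hRR')
  have c4 := q (Complex.I * Φ ⟨R, -S⟩) (by simpa using hb R hRR) (by simpa using hr (-S))
  have r2 : -Complex.I * (-Complex.I * Φ ⟨-R, S⟩) = -1 * Φ ⟨-R, S⟩ := by
    rw [← mul_assoc]; congr 1; simp
  have r3 : -Complex.I * (-1 * Φ ⟨-R, -S⟩) = Complex.I * Φ ⟨-R, -S⟩ := by ring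
  have r4 : -Complex.I * (Complex.I * Φ ⟨R, -S⟩) = 1 * Φ ⟨R, -S⟩ := by
    rw [← mul_assoc]; congr 1; simp
  rw [r2] at c2
  rw [r3] at c3
  rw [r4] at c4
  simp only [one_mul] at e1 c4
  have fin : (2 * Real.pi : ℂ) * Complex.I = 0 := by
    linear_combination -c1 - c2 - c3 - c4 - e1 + e2 + e3 - e4
  simp [Real.pi_ne_zero] at fin

end Fr

namespace Fr

section period2
variable (a b : ℂ)

def mob (u : ℂ) : ℂ := (a - u * b) / (1 - u)

variable {a b}

theorem mob_sub_b {u : ℂ} (hu : u ≠ 1) : mob a b u - b = (a - b) / (1 - u) := by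
  have : 1 - u ≠ 0 := sub_ne_zero.2 hu.symm
  unfold mob; field_simp; ring

theorem mob_sub_a {u : ℂ} (hu : u ≠ 1) : mob a b u - a = u * (a - b) / (1 - u) := by
  have : 1 - u ≠ 0 := sub_ne_zero.2 hu.symm
  unfold mob; field_simp; ring

theorem mob_ne_b (hab : a ≠ b) {u : ℂ} (hu : u ≠ 1) : mob a b u ≠ b := by
  rw [← sub_ne_zero, mob_sub_b hu]
  exact div_ne_zero (sub_ne_zero.2 hab) (sub_ne_zero.2 hu.symm)

theorem mob_ne_a (hab : a ≠ b) {u : ℂ} (hu : u ≠ 1) (h0 : u ≠ 0) : mob a b u ≠ a := by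
  rw [← sub_ne_zero, mob_sub_a hu]
  exact div_ne_zero (mul_ne_zero h0 (sub_ne_zero.2 hab)) (sub_ne_zero.2 hu.symm)

theorem mob_continuousAt {u : ℂ} (hu : u ≠ 1) : ContinuousAt (mob a b) u := by
  have : 1 - u ≠ 0 := sub_ne_zero.2 hu.symm
  unfold mob
  exact ContinuousAt.div (by fun_prop) (by fun_prop) this

theorem mob_inv {z : ℂ} (hab : a ≠ b) (hz : z ≠ b) : mob a b ((z - a) / (z - b)) = z := by
  have h1 : z - b ≠ 0 := sub_ne_zero.2 hz
  have h2 : a - b ≠ 0 := sub_ne_zero.2 hab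
  unfold mob
  have : 1 - (z - a) / (z - b) = (a - b) / (z - b) := by field_simp; ring
  rw [this]; field_simp; ring

theorem tendsto_mob (hab : a ≠ b) : Tendsto (mob a b) (𝓝[≠] 1) (Bornology.cobounded ℂ) := by
  have h1 : Tendsto (fun u : ℂ => 1 - u) (𝓝[≠] 1) (𝓝[≠] 0) := by
    refine tendsto_nhdsWithin_iff.2 ⟨?_, ?_⟩
    · have : Tendsto (fun u : ℂ => 1 - u) (𝓝 1) (𝓝 (1 - 1)) := by
        exact (continuous_const.sub continuous_id).tendsto 1
      rw [sub_self] at this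
      exact this.mono_left nhdsWithin_le_nhds
    · filter_upwards [self_mem_nhdsWithin] with u hu
      exact sub_ne_zero.2 (Ne.symm hu)
  have h2 : Tendsto (fun u : ℂ => (1 - u)⁻¹) (𝓝[≠] 1) (Bornology.cobounded ℂ) :=
    Filter.tendsto_inv₀_nhdsNE_zero.comp h1
  have h3 : Tendsto (fun u : ℂ => (a - b) * (1 - u)⁻¹ + b) (𝓝[≠] 1) (Bornology.cobounded ℂ) := by
    rw [← tendsto_norm_atTop_iff_cobounded] at h2 ⊢
    have h4 : Tendsto (fun u : ℂ => ‖a - b‖ * ‖(1 - u)⁻¹‖ + (-‖b‖)) (𝓝[≠] 1) atTop :=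
      tendsto_atTop_add_const_right _ _ (h2.const_mul_atTop (norm_pos_iff.2 (sub_ne_zero.2 hab)))
    refine tendsto_atTop_mono (fun u => ?_) h4
    rw [← norm_mul]
    have := norm_sub_le ((a - b) * (1 - u)⁻¹ + b) b
    rw [add_sub_cancel_right] at this
    linarith
  refine h3.congr' ?_
  filter_upwards [self_mem_nhdsWithin] with u hu
  have := mob_sub_b (a := a) (b := b) hu
  rw [sub_eq_iff_eq_add.1 this, div_eq_mul_inv]

variable (a b) in
def kk (h : ℂ ≃ₜ ℂ) (u : ℂ) : ℂ :=
  if u = 1 then 1 else (h (mob a b u) - a) / (h (mob a b u) - b)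

theorem homeo_tendsto (h : ℂ ≃ₜ ℂ) : Tendsto h (Bornology.cobounded ℂ) (Bornology.cobounded ℂ) := by
  rw [Metric.cobounded_eq_cocompact]
  exact h.isClosedEmbedding.tendsto_cocompact

theorem kk_continuousAt {h : ℂ ≃ₜ ℂ} (hab : a ≠ b) (ha : h a = b) {u : ℂ}
    (hu : u ≠ 0) : ContinuousAt (kk a b h) u := by
  by_cases h1 : u = 1
  · subst h1
    rw [continuousAt_iff_punctured_nhds]
    have e : kk a b h 1 = 1 := by simp [kk]
    rw [e]
    have t1 : Tendsto (fun u => h (mob a b u) - b) (𝓝[≠] 1) (Bornology.cobounded ℂ) := by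
      have := (homeo_tendsto h).comp (tendsto_mob hab)
      rw [← tendsto_norm_atTop_iff_cobounded] at this ⊢
      refine tendsto_atTop_mono (fun u => ?_) (tendsto_atTop_add_const_right _ (-‖b‖) this)
      have := norm_sub_norm_le (h (mob a b u)) b
      simp only [Function.comp]
      linarith
    have t2 : Tendsto (fun u => 1 + (b - a) * (h (mob a b u) - b)⁻¹) (𝓝[≠] 1) (𝓝 (1 + (b - a) * 0)) :=
      tendsto_const_nhds.add (tendsto_const_nhds.mul (tendsto_inv₀_cobounded.comp t1))
    rw [mul_zero, add_zero] at t2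
    refine t2.congr' ?_
    have hne : ∀ᶠ u : ℂ in 𝓝[≠] 1, u ≠ 0 :=
      (eventually_ne_nhds one_ne_zero).filter_mono nhdsWithin_le_nhds
    filter_upwards [self_mem_nhdsWithin, hne] with u hu1 hu0
    have hd : h (mob a b u) - b ≠ 0 := by
      rw [sub_ne_zero]
      exact fun h0 => mob_ne_a hab hu1 hu0 (h.injective (h0.trans ha.symm))
    rw [kk, if_neg (show u ≠ 1 from hu1)]
    field_simp
    ring
  · have hd : h (mob a b u) - b ≠ 0 := by
      rw [sub_ne_zero]
      exact fun h0 => mob_ne_a hab h1 hu (h.injective (h0.trans ha.symm))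
    have hm := (h.continuous.continuousAt (x := mob a b u)).comp (mob_continuousAt (a := a) (b := b) h1)
    have : ContinuousAt (fun u => (h (mob a b u) - a) / (h (mob a b u) - b)) u :=
      ContinuousAt.div (hm.sub continuousAt_const) (hm.sub continuousAt_const) hd
    refine this.congr ?_
    filter_upwards [eventually_ne_nhds h1] with v hv
    rw [kk, if_neg hv]

theorem kk_ne_zero {h : ℂ ≃ₜ ℂ} (hab : a ≠ b) (ha : h a = b) (hb : h b = a) {u : ℂ}
    (hu : u ≠ 0) : kk a b h u ≠ 0 := by
  unfold kk
  split_ifs with h1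
  · simp
  · refine div_ne_zero ?_ ?_
    · rw [sub_ne_zero]
      exact fun h0 => mob_ne_b hab h1 (h.injective (h0.trans hb.symm))
    · rw [sub_ne_zero]
      exact fun h0 => mob_ne_a hab h1 hu (h.injective (h0.trans ha.symm))

theorem mob_zero : mob a b 0 = a := by simp [mob]

/-- conditions near `u = 0`. -/
theorem near_zero {h : ℂ ≃ₜ ℂ} (hab : a ≠ b) (ha : h a = b) :
    ∃ δ > 0, δ < 1 ∧ ∀ u : ℂ, ‖u‖ < δ →
      ‖h (mob a b u) - b‖ < ‖h (mob a b u) - a‖ ∧ 0 < ((h (mob a b u) - a) / (b - a)).re := by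
  have hm := (h.continuous.continuousAt (x := mob a b 0)).comp
    (mob_continuousAt (a := a) (b := b) (u := 0) zero_ne_one)
  have hba : b - a ≠ 0 := sub_ne_zero.2 hab.symm
  have v : (h ∘ mob a b) 0 = b := by simp [mob_zero, ha]
  have e1 : ∀ᶠ u in 𝓝 (0:ℂ), ‖h (mob a b u) - b‖ < ‖h (mob a b u) - a‖ := by
    refine ContinuousAt.eventually_lt (f := fun u => ‖h (mob a b u) - b‖)
      (g := fun u => ‖h (mob a b u) - a‖) ?_ ?_ ?_
    · exact (hm.sub continuousAt_const).norm
    · exact (hm.sub continuousAt_const).norm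
    · simp [mob_zero, ha, hba]
  have e2 : ∀ᶠ u in 𝓝 (0:ℂ), 0 < ((h (mob a b u) - a) / (b - a)).re := by
    refine ContinuousAt.eventually_lt (f := fun u => (0:ℝ))
      (g := fun u => ((h (mob a b u) - a) / (b - a)).re) continuousAt_const ?_ ?_
    · exact Complex.continuous_re.continuousAt.comp ((hm.sub continuousAt_const).div_const _)
    · simp [mob_zero, ha, hba]
  obtain ⟨δ, hδ, h'⟩ := Metric.eventually_nhds_iff.1 (e1.and e2)
  refine ⟨min δ (1/2), by positivity, by linarith [min_le_right δ (1/2)], fun u hu => h' ?_⟩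
  rw [dist_zero_right]
  exact hu.trans_le (min_le_left _ _)

/-- condition near infinity. -/
theorem near_infty {h : ℂ ≃ₜ ℂ} (hab : a ≠ b) (hb : h b = a) :
    ∃ δ > 0, δ < 1 ∧ ∀ u : ℂ, u ≠ 0 → ‖u⁻¹‖ < δ →
      ‖h (mob a b u) - a‖ < ‖h (mob a b u) - b‖ := by
  have hm : ContinuousAt (fun v : ℂ => h ((a * v - b) / (v - 1))) 0 := by
    refine ContinuousAt.comp h.continuous.continuousAt ?_
    refine ContinuousAt.div (by fun_prop) (by fun_prop) (by simp)
  have e1 : ∀ᶠ v in 𝓝 (0:ℂ), ‖h ((a * v - b) / (v - 1)) - a‖ < ‖h ((a * v - b) / (v - 1)) - b‖ := by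
    refine ContinuousAt.eventually_lt (f := fun v => ‖h ((a * v - b) / (v - 1)) - a‖)
      (g := fun v => ‖h ((a * v - b) / (v - 1)) - b‖) ?_ ?_ ?_
    · exact (hm.sub continuousAt_const).norm
    · exact (hm.sub continuousAt_const).norm
    · simp [hb, sub_ne_zero.2 hab]
  obtain ⟨δ, hδ, h'⟩ := Metric.eventually_nhds_iff.1 e1
  refine ⟨min δ (1/2), by positivity, by linarith [min_le_right δ (1/2)], fun u hu0 hu => ?_⟩
  have := h' (y := u⁻¹) (by rw [dist_zero_right]; exact hu.trans_le (min_le_left _ _))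
  have e : (a * u⁻¹ - b) / (u⁻¹ - 1) = mob a b u := by
    unfold mob
    rw [← mul_div_mul_left (a * u⁻¹ - b) (u⁻¹ - 1) hu0]
    congr 1 <;> field_simp
  rwa [e] at this

theorem degree {h : ℂ ≃ₜ ℂ} (hI : Iso h) (hab : a ≠ b) (ha : h a = b)
    {K : ℂ → ℂ} (hK : Continuous K) (hKe : ∀ w, Complex.exp (K w) = kk a b h (Complex.exp w)) (w : ℂ) :
    K (w + 2 * Real.pi * Complex.I) = K w - 2 * Real.pi * Complex.I := by
  obtain ⟨F, F1, F2, F3, F4⟩ := hI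
  obtain ⟨δ, hδ, hδ1, hd⟩ := near_zero (h := h) hab ha
  have hba : b - a ≠ 0 := sub_ne_zero.2 hab.symm
  set r : ℝ := Real.log (δ / 2) with hr
  let W : ℝ → ℂ := fun s => r + s * Complex.I
  let u : ℝ → ℂ := fun s => Complex.exp (W s)
  have hWc : Continuous W := by fun_prop
  have huc : Continuous u := Complex.continuous_exp.comp hWc
  have hun : ∀ s, ‖u s‖ = δ / 2 := by
    intro s
    simp only [u, W, Complex.norm_exp]
    simp [hr]
    rw [Real.exp_log (by positivity)]
  have hWper : ∀ s, W (s + 2 * Real.pi) = W s + 2 * Real.pi * Complex.I := by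
    intro s; simp only [W]; push_cast; ring
  have huper : ∀ s, u (s + 2 * Real.pi) = u s := by
    intro s; simp only [u, hWper, Complex.exp_add, Complex.exp_two_pi_mul_I, mul_one]
  have hu0 : ∀ s, u s ≠ 0 := fun s => Complex.exp_ne_zero _
  have hu1 : ∀ s, u s ≠ 1 := by
    intro s hs
    have := hun s
    rw [hs, norm_one] at this
    linarith
  have hmc : Continuous fun s => mob a b (u s) :=
    continuous_iff_continuousAt.2 fun s => (mob_continuousAt (hu1 s)).comp huc.continuousAt
  have hud := fun s => hd (u s) (by rw [hun]; linarith)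
  obtain ⟨Λ, hΛ, hΛe⟩ := exists_log' (A := ℝ × ℝ)
    (fun p => F p.1 (mob a b (u p.2)) - F p.1 a)
    ((F1.comp (continuous_fst.prodMk (hmc.comp continuous_snd))).sub
      (F1.comp (continuous_fst.prodMk continuous_const)))
    (fun p => sub_ne_zero.2 ((F2 p.1).ne (mob_ne_a hab (hu1 _) (hu0 _))))
  -- jump of Λ is constant
  have J : ∀ t s t' s', Λ (t, s + 2 * Real.pi) - Λ (t, s) = Λ (t', s' + 2 * Real.pi) - Λ (t', s') := by
    intro t s t' s'
    have := const_of_exp_eq (A := ℝ × ℝ) isPreconnected_univ (K := fun p => Λ (p.1, p.2 + 2 * Real.pi))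
      (L := Λ) (Continuous.continuousOn (by fun_prop)) hΛ.continuousOn
      (by intro p _; rw [hΛe, hΛe]; simp only [huper])
      (x := (t, s)) (y := (t', s')) (mem_univ _) (mem_univ _)
    exact this
  -- at time 0
  have J0 : Λ (0, 0 + 2 * Real.pi) - Λ (0, 0) = 2 * Real.pi * Complex.I := by
    have := const_of_exp_eq (A := ℝ) isPreconnected_univ (K := fun s => Λ (0, s))
      (L := fun s => W s + Complex.log (a - b) - Complex.log (1 - u s))
      (Continuous.continuousOn (by fun_prop))
      (Continuous.continuousOn (by
        refine (hWc.add continuous_const).sub ?_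
        refine Continuous.clog (by fun_prop) ?_
        intro s
        left
        have := (Complex.abs_re_le_norm (u s)).trans_eq (hun s)
        simp only [Complex.sub_re, Complex.one_re]
        linarith [le_abs_self (u s).re]))
      (by
        intro s _
        rw [hΛe, Complex.exp_sub, Complex.exp_add, Complex.exp_log (sub_ne_zero.2 hab),
          Complex.exp_log (sub_ne_zero.2 (hu1 s).symm)]
        simp only [F3]
        rw [mob_sub_a (hu1 s)])
      (x := 0 + 2 * Real.pi) (y := 0) (mem_univ _) (mem_univ _)
    rw [hWper, huper] at this
    linear_combination this
  have J1 : K (W (0 + 2 * Real.pi)) - K (W 0) = - (Λ (1, 0 + 2 * Real.pi) - Λ (1, 0)) := by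
    have := const_of_exp_eq (A := ℝ) isPreconnected_univ (K := fun s => K (W s))
      (L := fun s => Complex.log ((h (mob a b (u s)) - a) / (b - a)) + Complex.log (b - a) - Λ (1, s))
      (Continuous.continuousOn (by fun_prop))
      (Continuous.continuousOn (by
        refine Continuous.sub (Continuous.add ?_ continuous_const) (by fun_prop)
        refine Continuous.clog ?_ ?_
        · exact ((h.continuous.comp hmc).sub continuous_const).div_const _
        · intro s; left; exact (hud s).2))
      (by
        intro s _
        rw [hKe, Complex.exp_sub, Complex.exp_add (Complex.log _), Complex.exp_log hba, hΛe, Complex.exp_log]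
        · simp only [F4, ha]
          rw [div_mul_cancel₀ _ hba]
          change kk a b h (u s) = _
          rw [kk, if_neg (hu1 s)]
        · intro h0
          have := (hud s).2
          rw [h0] at this
          simp at this)
      (x := 0 + 2 * Real.pi) (y := 0) (mem_univ _) (mem_univ _)
    rw [huper] at this
    linear_combination this
  have := const_of_exp_eq (A := ℂ) isPreconnected_univ (K := fun w => K (w + 2 * Real.pi * Complex.I))
      (L := K) (Continuous.continuousOn (by fun_prop)) hK.continuousOn
      (by intro w _; rw [hKe, hKe]; simp [Complex.exp_add])
      (x := w) (y := W 0) (mem_univ _) (mem_univ _)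
  rw [J 1 0 0 0, J0, hWper] at J1
  linear_combination this + J1

theorem period2 {h : ℂ ≃ₜ ℂ} (hI : Iso h) (hab : a ≠ b) (ha : h a = b) (hb : h b = a) :
    ∃ z, h z = z := by
  obtain ⟨K, hK, hKe⟩ := exists_log' (A := ℂ) (fun w => kk a b h (Complex.exp w))
    (continuous_iff_continuousAt.2 fun w =>
      (kk_continuousAt hab ha (Complex.exp_ne_zero w)).comp Complex.continuous_exp.continuousAt)
    (fun w => kk_ne_zero hab ha hb (Complex.exp_ne_zero w))
  have hdeg := degree hI hab ha hK hKe
  have hdegn : ∀ (n : ℕ) w, K (w + n * (2 * Real.pi * Complex.I)) = K w - n * (2 * Real.pi * Complex.I) := by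
    intro n
    induction n with
    | zero => intro w; simp
    | succ n ih =>
      intro w
      have e : w + ((n + 1 : ℕ) : ℂ) * (2 * Real.pi * Complex.I)
        = (w + n * (2 * Real.pi * Complex.I)) + 2 * Real.pi * Complex.I := by push_cast; ring
      rw [e, hdeg, ih]; push_cast; ring
  have hdegz : ∀ (n : ℤ) w, K (w + n * (2 * Real.pi * Complex.I)) = K w - n * (2 * Real.pi * Complex.I) := by
    intro n w
    obtain ⟨m, rfl | rfl⟩ := n.eq_nat_or_neg
    · exact_mod_cast hdegn m w
    · have := hdegn m (w + ((-(m:ℤ) : ℤ) : ℂ) * (2 * Real.pi * Complex.I))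
      push_cast at this ⊢
      rw [show w + -(m:ℂ) * (2 * Real.pi * Complex.I) + m * (2 * Real.pi * Complex.I) = w by ring] at this
      rw [this]; ring
  obtain ⟨δ, hδ, hδ1, hd⟩ := near_zero (h := h) hab ha
  obtain ⟨ε, hε, hε1, he⟩ := near_infty (h := h) hab hb
  -- big R
  obtain ⟨R, hR, hRδ, hRε⟩ : ∃ R : ℝ, 0 < R ∧ Real.exp (-R) < δ ∧ Real.exp (-R) < ε := by
    have : Tendsto (fun R : ℝ => Real.exp (-R)) atTop (𝓝 0) := Real.tendsto_exp_neg_atTop_nhds_zero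
    have e := ((this.eventually_lt_const hδ).and (this.eventually_lt_const hε)).and (eventually_gt_atTop 0)
    obtain ⟨R, ⟨h1, h2⟩, h3⟩ := e.exists
    exact ⟨R, h3, h1, h2⟩
  have reK : ∀ w, Real.exp (K w).re = ‖kk a b h (Complex.exp w)‖ := by
    intro w; rw [← hKe, Complex.norm_exp]
  have hleft : ∀ y : ℝ, 0 < (K ⟨-R, y⟩).re := by
    intro y
    have hn : ‖Complex.exp ⟨-R, y⟩‖ = Real.exp (-R) := by rw [Complex.norm_exp]
    have h1 : Complex.exp ⟨-R, y⟩ ≠ 1 := by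
      intro h1; rw [h1, norm_one] at hn; linarith
    have h2 := (hd _ (hn.trans_lt hRδ)).1
    rw [← Real.one_lt_exp_iff, reK, kk, if_neg h1, norm_div]
    have h3 : h (mob a b (Complex.exp ⟨-R, y⟩)) - b ≠ 0 := by
      rw [sub_ne_zero]
      exact fun h0 => mob_ne_a hab h1 (Complex.exp_ne_zero _) (h.injective (h0.trans ha.symm))
    rwa [one_lt_div (norm_pos_iff.2 h3)]
  have hright : ∀ y : ℝ, (K ⟨R, y⟩).re < 0 := by
    intro y
    have hn : ‖(Complex.exp ⟨R, y⟩)⁻¹‖ = Real.exp (-R) := by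
      rw [norm_inv, Complex.norm_exp, Real.exp_neg]
    have h1 : Complex.exp ⟨R, y⟩ ≠ 1 := by
      intro h1; rw [h1, inv_one, norm_one] at hn; linarith
    have h2 := he _ (Complex.exp_ne_zero _) (hn.trans_lt hRε)
    rw [← Real.exp_lt_one_iff, reK, kk, if_neg h1, norm_div]
    have h3 : h (mob a b (Complex.exp ⟨R, y⟩)) - b ≠ 0 := by
      rw [sub_ne_zero]
      exact fun h0 => mob_ne_a hab h1 (Complex.exp_ne_zero _) (h.injective (h0.trans ha.symm))
    rwa [div_lt_one (norm_pos_iff.2 h3)]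
  have zero : ∀ c : ℝ, ∃ w, w - K w - c * Complex.I = 0 := by
    intro c
    have hc : Continuous fun x : ℝ => |((x : ℂ) - K x - c * Complex.I).im| := by fun_prop
    obtain ⟨B, hB⟩ := (isCompact_Icc (a := -R) (b := R)).bddAbove_image hc.continuousOn
    have hB' : ∀ x : ℝ, |x| ≤ R → |((x : ℂ) - K x - c * Complex.I).im| ≤ B := fun x hx =>
      hB ⟨x, abs_le.1 hx, rfl⟩
    obtain ⟨N, hN⟩ := exists_nat_gt (max B 0)
    have hN0 : (0:ℝ) < N := (le_max_right _ _).trans_lt hN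
    have hNB : B < N := (le_max_left _ _).trans_lt hN
    have hpi := Real.pi_gt_three
    have hsh : ∀ (n : ℤ) (x : ℝ), ((⟨x, n * (2 * Real.pi)⟩ : ℂ) - K ⟨x, n * (2 * Real.pi)⟩ - c * Complex.I).im
        = ((x : ℂ) - K x - c * Complex.I).im + n * (4 * Real.pi) := by
      intro n x
      have e : (⟨x, n * (2 * Real.pi)⟩ : ℂ) = x + n * (2 * Real.pi * Complex.I) := by
        rw [Complex.mk_eq_add_mul_I]; push_cast; ring
      rw [e, hdegz]
      simp
      ring
    refine miranda (fun w => w - K w - c * Complex.I) (by fun_prop) R ((N : ℤ) * (2 * Real.pi)) hR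
      (by push_cast; positivity) ?_ ?_ ?_ ?_
    · intro y; have := hright y; simp; linarith
    · intro y; have := hleft y; simp; linarith
    · intro x hx
      have := hsh N x
      rw [this]
      have := (abs_le.1 (hB' x hx)).1
      push_cast
      nlinarith
    · intro x hx
      have := hsh (-N) x
      have e : (((-N : ℤ) : ℝ)) * (2 * Real.pi) = -(((N : ℤ) : ℝ) * (2 * Real.pi)) := by push_cast; ring
      rw [e] at this
      rw [this]
      have := (abs_le.1 (hB' x hx)).2
      push_cast
      nlinarith
  have fixk : ∀ u, u ≠ 0 → u ≠ 1 → kk a b h u = u → ∃ z, h z = z := by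
    intro u hu0 hu1 hk
    refine ⟨mob a b u, ?_⟩
    rw [kk, if_neg hu1] at hk
    have h3 : h (mob a b u) ≠ b := by
      exact fun h0 => mob_ne_a hab hu1 hu0 (h.injective (h0.trans ha.symm))
    have := mob_inv (a := a) hab h3
    rw [hk] at this
    exact this.symm
  obtain ⟨w0, hw0⟩ := zero 0
  obtain ⟨w1, hw1⟩ := zero (2 * Real.pi)
  have k0 : K w0 = w0 := by simp at hw0; exact (sub_eq_zero.1 hw0).symm
  have k1 : K w1 = w1 - 2 * Real.pi * Complex.I := by push_cast at hw1; linear_combination -hw1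
  by_cases u0 : Complex.exp w0 = 1
  · by_cases u1 : Complex.exp w1 = 1
    · exfalso
      obtain ⟨n, hn⟩ := Complex.exp_eq_exp_iff_exists_int.1 (u1.trans u0.symm)
      have := hdegz n w0
      rw [← hn, k0, k1, hn] at this
      have h2 : (2 * n - 1 : ℂ) * (2 * Real.pi * Complex.I) = 0 := by linear_combination this
      rw [mul_eq_zero] at h2
      rcases h2 with h2 | h2
      · have h3 : (2 * n - 1 : ℤ) = 0 := by exact_mod_cast h2
        omega
      · simp [Real.pi_ne_zero] at h2
    · refine fixk _ (Complex.exp_ne_zero w1) u1 ?_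
      rw [← hKe, k1, Complex.exp_sub, Complex.exp_two_pi_mul_I, div_one]
  · refine fixk _ (Complex.exp_ne_zero w0) u0 ?_
    rw [← hKe, k0]

end period2
end Fr

namespace Fr

/-- tent function bump -/
def tent (c : ℂ) (r : ℝ) (x : ℂ) : ℝ := max 0 (1 - ‖x - c‖ / r)

lemma tent_lip {c : ℂ} {r : ℝ} (hr : 0 < r) (x y : ℂ) :
    |tent c r x - tent c r y| ≤ ‖x - y‖ / r := by
  unfold tent
  refine (abs_max_sub_max_le_max _ _ _ _).trans ?_
  simp only [sub_self, abs_zero]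
  refine max_le (by positivity) ?_
  have : (1 - ‖x - c‖ / r) - (1 - ‖y - c‖ / r) = (‖y - c‖ - ‖x - c‖) / r := by ring
  rw [this, abs_div, abs_of_pos hr]
  gcongr
  have := abs_norm_sub_norm_le (y - c) (x - c)
  rw [show y - c - (x - c) = y - x by ring, norm_sub_rev y x] at this
  exact this

lemma tent_lip' {c q : ℂ} {r : ℝ} (hr : 0 < r) (s : ℝ) (hs0 : 0 ≤ s) (hs1 : s ≤ 1) (x y : ℂ) :
    ‖((s * tent c r x : ℝ) : ℂ) * (q - c) - ((s * tent c r y : ℝ) : ℂ) * (q - c)‖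
      ≤ ‖q - c‖ / r * ‖x - y‖ := by
  rw [← sub_mul, norm_mul, ← Complex.ofReal_sub, Complex.norm_real, ← mul_sub, norm_mul]
  have h1 := tent_lip (c := c) hr x y
  have h2 : ‖s‖ ≤ 1 := by rw [Real.norm_eq_abs, abs_of_nonneg hs0]; exact hs1
  calc ‖s‖ * ‖tent c r x - tent c r y‖ * ‖q - c‖ ≤ 1 * (‖x - y‖ / r) * ‖q - c‖ := by
        gcongr; exact h1
    _ = _ := by ring

lemma push_ball (c : ℂ) {r : ℝ} (hr : 0 < r) {q : ℂ} (hq : q ∈ ball c r) :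
    ∃ φ : ℂ ≃ₜ ℂ, Iso φ ∧ (∀ x, x ∉ ball c r → φ x = x) ∧ φ c = q := by
  have hk : ‖q - c‖ / r < 1 := by
    rw [div_lt_one hr]; simpa [dist_eq_norm] using hq
  set k : NNReal := ⟨‖q - c‖ / r, by positivity⟩ with hkdef
  have hap : ApproximatesLinearOn (fun x : ℂ => x + ((1 * tent c r x : ℝ) : ℂ) * (q - c))
      ((ContinuousLinearEquiv.refl ℝ ℂ : ℂ ≃L[ℝ] ℂ) : ℂ →L[ℝ] ℂ) univ k := by
    rw [ApproximatesLinearOn]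
    intro x _ y _
    have := tent_lip' (c := c) (q := q) hr 1 zero_le_one le_rfl x y
    have e : x + ((1 * tent c r x : ℝ) : ℂ) * (q - c) - (y + ((1 * tent c r y : ℝ) : ℂ) * (q - c))
      - ((ContinuousLinearEquiv.refl ℝ ℂ : ℂ ≃L[ℝ] ℂ) : ℂ →L[ℝ] ℂ) (x - y)
      = ((1 * tent c r x : ℝ) : ℂ) * (q - c) - ((1 * tent c r y : ℝ) : ℂ) * (q - c) := by
      simp
      ring
    rw [e]; exact this
  have hkk : Subsingleton ℂ ∨ k < ‖(((ContinuousLinearEquiv.refl ℝ ℂ).symm : ℂ ≃L[ℝ] ℂ) : ℂ →L[ℝ] ℂ)‖₊⁻¹ := by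
    right
    have : ‖(((ContinuousLinearEquiv.refl ℝ ℂ).symm : ℂ ≃L[ℝ] ℂ) : ℂ →L[ℝ] ℂ)‖₊ = 1 := by
      have : ‖(((ContinuousLinearEquiv.refl ℝ ℂ).symm : ℂ ≃L[ℝ] ℂ) : ℂ →L[ℝ] ℂ)‖ = 1 := by
        simp
      exact NNReal.eq this
    rw [this, inv_one]
    exact_mod_cast hk
  let φ : ℂ ≃ₜ ℂ := hap.toHomeomorph _ hkk
  have hφ : ∀ x, φ x = x + ((1 * tent c r x : ℝ) : ℂ) * (q - c) := fun x => rfl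
  have htc : Continuous (tent c r) := by unfold tent; fun_prop
  refine ⟨φ, ⟨fun t x => x + (((max 0 (min t 1)) * tent c r x : ℝ) : ℂ) * (q - c), ?_, ?_, ?_, ?_⟩, ?_, ?_⟩
  · have : Continuous (fun p : ℝ × ℂ => tent c r p.2) := htc.comp continuous_snd
    fun_prop
  · intro t x y hxy
    have h1 := tent_lip' (c := c) (q := q) hr (max 0 (min t 1)) (le_max_left _ _)
      (max_le zero_le_one (min_le_right _ _)) x y
    by_contra hne
    have hpos : 0 < ‖x - y‖ := norm_pos_iff.2 (sub_ne_zero.2 hne)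
    have e : x - y = -(((((max 0 (min t 1)) * tent c r x : ℝ) : ℂ) * (q - c)) -
      ((((max 0 (min t 1)) * tent c r y : ℝ) : ℂ) * (q - c))) := by
      have hxy' : x + (((max 0 (min t 1)) * tent c r x : ℝ) : ℂ) * (q - c)
        = y + (((max 0 (min t 1)) * tent c r y : ℝ) : ℂ) * (q - c) := hxy
      linear_combination hxy'
    have e2 := congrArg norm e
    rw [norm_neg] at e2
    rw [← e2] at h1
    nlinarith
  · intro z; simp
  · intro z; simp [hφ]
  · intro x hx
    rw [hφ]
    have : tent c r x = 0 := by
      unfold tent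
      apply max_eq_left
      have : r ≤ ‖x - c‖ := by simpa [dist_eq_norm] using hx
      have := (one_le_div hr).2 this
      linarith
    simp [this]
  · rw [hφ]; simp [tent]

lemma push {V : Set ℂ} (hV : IsOpen V) (hc : IsPreconnected V) {p q : ℂ} (hp : p ∈ V) (hq : q ∈ V) :
    ∃ φ : ℂ ≃ₜ ℂ, Iso φ ∧ (∀ x, x ∉ V → φ x = x) ∧ φ p = q := by
  refine hc.induction₂ (fun p q => ∃ φ : ℂ ≃ₜ ℂ, Iso φ ∧ (∀ x, x ∉ V → φ x = x) ∧ φ p = q)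
    ?_ ?_ ?_ hp hq
  · intro x hx
    obtain ⟨r, hr, hb⟩ := Metric.isOpen_iff.1 hV x hx
    have : ball x r ∈ 𝓝[V] x := mem_nhdsWithin_of_mem_nhds (ball_mem_nhds x hr)
    filter_upwards [this] with y hy
    obtain ⟨φ, h1, h2, h3⟩ := push_ball x hr hy
    exact ⟨φ, h1, fun z hz => h2 z (fun h => hz (hb h)), h3⟩
  · rintro x y z hx hy hz ⟨φ, h1, h2, h3⟩ ⟨ψ, k1, k2, k3⟩
    refine ⟨φ.trans ψ, h1.trans k1, fun w hw => ?_, ?_⟩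
    · simp [h2 w hw, k2 w hw]
    · simp [h3, k3]
  · rintro x y hx hy ⟨φ, h1, h2, h3⟩
    refine ⟨φ.symm, h1.symm, fun w hw => ?_, ?_⟩
    · rw [Homeomorph.symm_apply_eq, h2 w hw]
    · rw [Homeomorph.symm_apply_eq, h3]

lemma maps_of_id_off {V : Set ℂ} {φ : ℂ ≃ₜ ℂ} (h : ∀ x, x ∉ V → φ x = x) {x : ℂ} (hx : x ∈ V) :
    φ x ∈ V := by
  by_contra hn
  have := φ.injective (h _ hn)
  rw [this] at hn
  exact hn hx

lemma multipush {ι : Type*} (s : Finset ι) (V : ι → Set ℂ) (p q : ι → ℂ)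
    (hV : ∀ i ∈ s, IsOpen (V i)) (hc : ∀ i ∈ s, IsPreconnected (V i))
    (hd : ∀ i ∈ s, ∀ j ∈ s, i ≠ j → Disjoint (V i) (V j))
    (hp : ∀ i ∈ s, p i ∈ V i) (hq : ∀ i ∈ s, q i ∈ V i) :
    ∃ φ : ℂ ≃ₜ ℂ, Iso φ ∧ (∀ x, (∀ i ∈ s, x ∉ V i) → φ x = x) ∧
      (∀ i ∈ s, ∀ x ∈ V i, φ x ∈ V i) ∧ ∀ i ∈ s, φ (p i) = q i := by
  induction s using Finset.induction_on with
  | empty => exact ⟨Homeomorph.refl ℂ, Iso.refl, by simp, by simp, by simp⟩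
  | insert a s ha ih =>
    obtain ⟨φ, h1, h2, h3, h4⟩ := ih (fun i hi => hV i (Finset.mem_insert_of_mem hi))
      (fun i hi => hc i (Finset.mem_insert_of_mem hi))
      (fun i hi j hj => hd i (Finset.mem_insert_of_mem hi) j (Finset.mem_insert_of_mem hj))
      (fun i hi => hp i (Finset.mem_insert_of_mem hi))
      (fun i hi => hq i (Finset.mem_insert_of_mem hi))
    have haS := Finset.mem_insert_self a s
    obtain ⟨ψ, k1, k2, k3⟩ := push (hV a haS) (hc a haS) (hp a haS) (hq a haS)
    have hna : ∀ i ∈ s, ∀ x ∈ V i, x ∉ V a := fun i hi x hx hxa =>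
      Set.disjoint_left.1 (hd i (Finset.mem_insert_of_mem hi) a haS (by rintro rfl; exact ha hi)) hx hxa
    refine ⟨φ.trans ψ, h1.trans k1, ?_, ?_, ?_⟩
    · intro x hx
      have e1 : φ x = x := h2 x (fun i hi => hx i (Finset.mem_insert_of_mem hi))
      simp [e1, k2 x (hx a haS)]
    · intro i hi x hx
      rcases Finset.mem_insert.1 hi with rfl | hi
      · have e1 : φ x = x := h2 x (fun j hj hxj => hna j hj x hxj hx)
        simpa [e1] using maps_of_id_off k2 hx
      · have := h3 i hi x hx
        simpa [k2 _ (hna i hi _ this)] using this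
    · intro i hi
      rcases Finset.mem_insert.1 hi with rfl | hi
      · have e1 : φ (p i) = p i := h2 _ (fun j hj hxj => hna j hj _ hxj (hp i haS))
        simpa [e1] using k3
      · have := h3 i hi _ (hp i (Finset.mem_insert_of_mem hi))
        rw [Homeomorph.trans_apply, k2 _ (hna i hi _ this), h4 i hi]

/-- free set -/
def Free (h : ℂ ≃ₜ ℂ) (V : Set ℂ) : Prop := ∀ x ∈ V, h x ∉ V

lemma Free.symm {h : ℂ ≃ₜ ℂ} {V : Set ℂ} (hf : Free h V) : Free h.symm V := by
  intro x hx hx'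
  have := hf _ hx'
  rw [h.apply_symm_apply] at this
  exact this hx

lemma Free.image {h : ℂ ≃ₜ ℂ} {V : Set ℂ} (hf : Free h V) (n : ℕ) : Free h ((⇑h)^[n] '' V) := by
  rintro _ ⟨x, hx, rfl⟩ ⟨y, hy, e⟩
  rw [← Function.iterate_succ_apply' (⇑h), Function.iterate_succ_apply] at e
  have := h.injective.iterate n e
  rw [this] at hy
  exact hf x hx hy

lemma fpf_comp {h φ : ℂ ≃ₜ ℂ} (hf : ∀ z, h z ≠ z) {ι : Type*} (s : Finset ι) (V : ι → Set ℂ)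
    (hfree : ∀ i ∈ s, Free h (V i))
    (h2 : ∀ x, (∀ i ∈ s, x ∉ V i) → φ x = x)
    (h3 : ∀ i ∈ s, ∀ x ∈ V i, φ x ∈ V i) : ∀ z, (h.trans φ) z ≠ z := by
  intro z hz
  rw [Homeomorph.trans_apply] at hz
  by_cases hx : ∀ i ∈ s, h z ∉ V i
  · rw [h2 _ hx] at hz; exact hf z hz
  · push Not at hx
    obtain ⟨i, hi, hx⟩ := hx
    have := h3 i hi _ hx
    rw [hz] at this
    exact hfree i hi z this hx

lemma isOpen_iter {h : ℂ ≃ₜ ℂ} {V : Set ℂ} (hV : IsOpen V) (n : ℕ) : IsOpen ((⇑h)^[n] '' V) := by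
  induction n with
  | zero => simpa
  | succ n ih =>
    rw [Function.iterate_succ', image_comp]
    exact h.isOpenMap _ ih

lemma free_return {h : ℂ ≃ₜ ℂ} (hI : Iso h) (hf : ∀ z, h z ≠ z) {n : ℕ}
    (IH : ∀ m < n, 1 ≤ m → ∀ h : ℂ ≃ₜ ℂ, Iso h → (∀ z, h z ≠ z) → ∀ z, (⇑h)^[m] z ≠ z)
    {V : Set ℂ} (hV : IsOpen V) (hc : IsPreconnected V) (hfree : Free h V) {x : ℂ} (hx : x ∈ V) :
    ∀ j, 1 ≤ j → j < n → (⇑h)^[j] x ∉ V := by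
  intro j
  induction j using Nat.strong_induction_on with
  | _ j ihj =>
  intro hj1 hjn hmem
  obtain ⟨φ, h1, h2, h3, h4⟩ := multipush ({0} : Finset ℕ) (fun _ => V) (fun _ => (⇑h)^[j] x) (fun _ => x)
    (fun _ _ => hV) (fun _ _ => hc) (by simp) (fun _ _ => hmem) (fun _ _ => hx)
  have hfp := fpf_comp hf ({0} : Finset ℕ) (fun _ => V) (fun _ _ => hfree) h2 h3
  apply IH j hjn hj1 _ (hI.trans h1) hfp x
  have key : ∀ i, i < j → (⇑(h.trans φ))^[i] x = (⇑h)^[i] x := by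
    intro i hi
    induction i with
    | zero => rfl
    | succ i ihi =>
      rw [Function.iterate_succ_apply', ihi (by omega), Homeomorph.trans_apply,
        ← Function.iterate_succ_apply' (⇑h)]
      exact h2 _ (fun _ _ => ihj (i+1) hi (by omega) (by omega))
  obtain ⟨i, rfl⟩ : ∃ i, j = i + 1 := ⟨j - 1, by omega⟩
  rw [Function.iterate_succ_apply', key i (by omega), Homeomorph.trans_apply,
        ← Function.iterate_succ_apply' (⇑h)]
  exact h4 0 (by simp)

end Fr

namespace Fr

lemma thin {h : ℂ ≃ₜ ℂ} {C O : Set ℂ} (hC : IsCompact C) (hcv : Convex ℝ C) (hfree : Free h C)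
    (hO : IsOpen O) (hCO : C ⊆ O) :
    ∃ V, IsOpen V ∧ IsPreconnected V ∧ C ⊆ V ∧ V ⊆ O ∧ Free h V := by
  have hd : Disjoint (h '' C) C := by
    rw [Set.disjoint_left]
    rintro _ ⟨x, hx, rfl⟩
    exact hfree x hx
  obtain ⟨A, B, hA, hB, hCA, hCB, hAB⟩ := SeparatedNhds.of_isCompact_isCompact (hC.image h.continuous) hC hd
  have hO' : IsOpen (O ∩ B ∩ h ⁻¹' A) := (hO.inter hB).inter (hA.preimage h.continuous)
  have hsub : C ⊆ O ∩ B ∩ h ⁻¹' A := fun x hx => ⟨⟨hCO hx, hCB hx⟩, hCA (mem_image_of_mem _ hx)⟩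
  obtain ⟨δ, hδ, hT⟩ := hC.exists_thickening_subset_open hO' hsub
  refine ⟨thickening δ C, isOpen_thickening, (hcv.thickening δ).isPreconnected,
    self_subset_thickening hδ C, fun x hx => (hT hx).1.1, fun x hx hx' => ?_⟩
  exact Set.disjoint_left.1 hAB (hT hx).2 (hT hx').1.2

lemma iter_mem_iff (h : ℂ ≃ₜ ℂ) (V : Set ℂ) (n : ℕ) (x : ℂ) :
    (⇑h)^[n] x ∈ (⇑h)^[n] '' V ↔ x ∈ V :=
  (h.injective.iterate n).mem_set_image

lemma caseA {n : ℕ} (hn : 3 ≤ n)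
    (IH : ∀ m < n, 1 ≤ m → ∀ h : ℂ ≃ₜ ℂ, Iso h → (∀ z, h z ≠ z) → ∀ z, (⇑h)^[m] z ≠ z)
    {h : ℂ ≃ₜ ℂ} (hI : Iso h) (hf : ∀ z, h z ≠ z) {z v : ℂ} (hz : (⇑h)^[n] z = z)
    (γ : ℝ → ℂ) (hγ : ∀ t, γ t = z + t • v) {u s : ℝ} (hu : 0 ≤ u) (hus : u < s)
    (hh : h (γ u) = γ s) (hfree : ∀ a b, 0 ≤ a → 0 ≤ b → a < s → b < s → h (γ a) ≠ γ b) : False := by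
  have hγc : Continuous γ := by
    have : γ = fun t => z + t • v := funext hγ
    rw [this]; fun_prop
  have h0 : γ 0 = z := by simp [hγ]
  have hcomp : ∀ r, IsCompact (γ '' Icc 0 r) := fun r => isCompact_Icc.image hγc
  have hconv : ∀ r, Convex ℝ (γ '' Icc 0 r) := by
    intro r
    rintro _ ⟨a, ha, rfl⟩ _ ⟨b, hb, rfl⟩ k l hk hl hkl
    refine ⟨k * a + l * b, (convex_Icc 0 r) ha hb hk hl hkl, ?_⟩
    simp only [hγ, smul_add, smul_smul, add_smul]
    have : z = k • z + l • z := by rw [← add_smul, hkl, one_smul]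
    nth_rewrite 1 [this]
    abel
  have hFr : ∀ r, r < s → Free h (γ '' Icc 0 r) := by
    rintro r hr _ ⟨a, ha, rfl⟩ ⟨b, hb, e⟩
    exact hfree a b ha.1 hb.1 (ha.2.trans_lt hr) (hb.2.trans_lt hr) e.symm
  have hd2 : Disjoint ((⇑h)^[2] '' (γ '' Icc 0 u)) (γ '' Icc 0 s) := by
    rw [Set.disjoint_left]
    rintro _ ⟨_, ⟨a, ha, rfl⟩, rfl⟩ ⟨b, hb, e⟩
    rcases hb.2.lt_or_eq with hbs | rfl
    · obtain ⟨V, hV, hVc, hCV, -, hVf⟩ := thin (hcomp (max u b)) (hconv _) (hFr _ (max_lt hus hbs))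
        isOpen_univ (subset_univ _)
      have ha' : γ a ∈ V := hCV ⟨a, ⟨ha.1, ha.2.trans (le_max_left _ _)⟩, rfl⟩
      have hb' : γ b ∈ V := hCV ⟨b, ⟨hb.1, (le_max_right _ _)⟩, rfl⟩
      have := free_return hI hf IH hV hVc hVf ha' 2 (by norm_num) (by omega)
      rw [← e] at this
      exact this hb'
    · rw [← hh] at e
      have e' : γ u = h (γ a) := h.injective e
      exact hfree a u ha.1 hu (ha.2.trans_lt hus) hus e'.symm
  obtain ⟨Oa, Os, hOa, hOs, hsa, hss, hdis⟩ := SeparatedNhds.of_isCompact_isCompact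
    ((hcomp u).image (h.continuous.iterate 2)) (hcomp s) hd2
  obtain ⟨V3, hV3, hV3c, hC3, hV3O, hV3f⟩ := thin (hcomp u) (hconv u) (hFr u hus)
    (hOa.preimage (h.continuous.iterate 2)) (fun x hx => hsa (mem_image_of_mem _ hx))
  have hev : ∀ᶠ t in 𝓝 s, h.symm (γ t) ∈ V3 := by
    apply (h.symm.continuous.comp hγc).continuousAt.eventually_mem
    apply hV3.mem_nhds
    rw [Function.comp_apply, ← hh, h.symm_apply_apply]
    exact hC3 ⟨u, ⟨hu, le_rfl⟩, rfl⟩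
  have hev2 : ∀ᶠ t in 𝓝[<] s, h.symm (γ t) ∈ V3 ∧ u < t ∧ t < s := by
    have a1 : ∀ᶠ t in 𝓝[<] s, u < t := (eventually_gt_nhds hus).filter_mono nhdsWithin_le_nhds
    have a2 : ∀ᶠ t in 𝓝[<] s, t < s := eventually_mem_nhdsWithin
    filter_upwards [hev.filter_mono nhdsWithin_le_nhds, a1, a2] with t b1 b2 b3 using ⟨b1, b2, b3⟩
  obtain ⟨s', hs'V, hus', hs's⟩ := hev2.exists
  have hs'0 : 0 ≤ s' := hu.trans hus'.le
  obtain ⟨V1, hV1, hV1c, hC1, hV1O, hV1f⟩ := thin (hcomp s') (hconv s') (hFr s' hs's) hOs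
    ((image_mono (Icc_subset_Icc_right hs's.le)).trans hss)
  have hz1 : z ∈ V1 := hC1 ⟨0, ⟨le_rfl, hs'0⟩, h0⟩
  have hz3 : z ∈ V3 := hC3 ⟨0, ⟨le_rfl, hu⟩, h0⟩
  let W : Bool → Set ℂ := fun b => if b then (⇑h)^[1] '' V1 else (⇑h)^[3] '' V3
  have hW1 : W true = (⇑h)^[1] '' V1 := rfl
  have hW3 : W false = (⇑h)^[3] '' V3 := rfl
  have hWd : Disjoint (W true) (W false) := by
    rw [Set.disjoint_left, hW1, hW3]
    rintro _ ⟨x, hx, rfl⟩ ⟨y, hy, e⟩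
    have e' : (⇑h)^[2] y = x := h.injective e
    have := hV3O hy
    rw [mem_preimage, e'] at this
    exact Set.disjoint_left.1 hdis this (hV1O hx)
  have hp1 : (⇑h)^[1] (γ s') ∈ (⇑h)^[1] '' V1 := mem_image_of_mem _ (hC1 ⟨s', ⟨hs'0, le_rfl⟩, rfl⟩)
  have hp3 : (⇑h)^[2] (γ s') ∈ (⇑h)^[3] '' V3 := by
    refine ⟨h.symm (γ s'), hs'V, ?_⟩
    rw [Function.iterate_succ_apply, h.apply_symm_apply]
  have hWfree : ∀ b, Free h (W b) := by
    intro b; cases b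
    · exact hV3f.image 3
    · exact hV1f.image 1
  obtain ⟨φ, k1, k2, k3, k4⟩ := multipush (Finset.univ : Finset Bool) W
    (fun b => if b then (⇑h)^[1] z else (⇑h)^[2] (γ s'))
    (fun b => if b then (⇑h)^[1] (γ s') else (⇑h)^[3] z)
    (by
      intro b _; cases b
      · exact isOpen_iter hV3 3
      · exact isOpen_iter hV1 1)
    (by
      intro b _; cases b
      · exact hV3c.image _ (h.continuous.iterate 3).continuousOn
      · exact hV1c.image _ (h.continuous.iterate 1).continuousOn)
    (by
      intro i _ j _ hij
      cases i <;> cases j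
      · exact absurd rfl hij
      · exact hWd.symm
      · exact hWd
      · exact absurd rfl hij)
    (by
      intro b _; cases b
      · exact hp3
      · exact mem_image_of_mem _ hz1)
    (by
      intro b _; cases b
      · exact mem_image_of_mem _ hz3
      · exact hp1)
  have hfp := fpf_comp hf Finset.univ W (fun i _ => hWfree i) k2 k3
  have e1 : (h.trans φ) z = h (γ s') := k4 true (Finset.mem_univ _)
  have e2 : (h.trans φ) (h (γ s')) = (⇑h)^[3] z := k4 false (Finset.mem_univ _)
  have key : ∀ i, 3 + i ≤ n → (⇑(h.trans φ))^[2 + i] z = (⇑h)^[3 + i] z := by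
    intro i
    induction i with
    | zero =>
      intro _
      change (h.trans φ) ((h.trans φ) z) = _
      rw [e1, e2]
    | succ i ih =>
      intro hi
      rw [← add_assoc, Function.iterate_succ_apply', ih (by omega), Homeomorph.trans_apply,
        ← Function.iterate_succ_apply' (⇑h)]
      apply k2
      intro b _
      cases b
      · rw [hW3, Nat.succ_eq_add_one, show 3 + i + 1 = 3 + (i + 1) by ring, Function.iterate_add_apply, iter_mem_iff]
        exact free_return hI hf IH hV3 hV3c hV3f hz3 (i+1) (by omega) (by omega)
      · rw [hW1, Nat.succ_eq_add_one, show 3 + i + 1 = 1 + (3 + i) by ring, Function.iterate_add_apply, iter_mem_iff]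
        exact free_return hI hf IH hV1 hV1c hV1f hz1 (3+i) (by omega) (by omega)
  have := key (n - 3) (by omega)
  rw [show 3 + (n - 3) = n by omega, hz] at this
  exact IH (2 + (n - 3)) (by omega) (by omega) _ (hI.trans k1) hfp z this

lemma brouwer : ∀ n, 1 ≤ n → ∀ h : ℂ ≃ₜ ℂ, Iso h → (∀ z, h z ≠ z) → ∀ z, (⇑h)^[n] z ≠ z := by
  intro n
  induction n using Nat.strong_induction_on with
  | _ n IH =>
  intro hn h hI hf z hz
  rcases Nat.lt_or_ge n 3 with h3 | h3
  · interval_cases n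
    · exact hf z hz
    · obtain ⟨w, hw⟩ := period2 hI (hf z).symm rfl hz
      exact hf w hw
  · let γ : ℝ → ℂ := fun t => z + t • (h z - z)
    have hγ : Continuous γ := by fun_prop
    have g0 : γ 0 = z := by simp [γ]
    have g1 : γ 1 = h z := by simp [γ]
    let T : Set (ℝ × ℝ) := (Icc 0 1 ×ˢ Icc 0 1) ∩ {p | h (γ p.1) = γ p.2}
    have hT : IsCompact T := by
      apply (isCompact_Icc.prod isCompact_Icc).inter_right
      exact isClosed_eq (by fun_prop) (by fun_prop)
    obtain ⟨⟨a, b⟩, ⟨⟨ha, hb⟩, hab⟩, hmin⟩ := hT.exists_isMinOn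
      ⟨(0, 1), ⟨⟨⟨le_rfl, zero_le_one⟩, ⟨zero_le_one, le_rfl⟩⟩, by simp [g0, g1]⟩⟩
      (f := fun p => max p.1 p.2) (by fun_prop)
    have hm : ∀ a' b', 0 ≤ a' → 0 ≤ b' → a' < max a b → b' < max a b → h (γ a') ≠ γ b' := by
      intro a' b' h1 h2 h3 h4 he
      have hab1 : max a b ≤ 1 := max_le ha.2 hb.2
      have := isMinOn_iff.1 hmin (a', b') ⟨⟨⟨h1, (h3.trans_le hab1).le⟩, ⟨h2, (h4.trans_le hab1).le⟩⟩, he⟩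
      exact absurd (max_lt h3 h4) (not_lt.2 this)
    have hab' : h (γ a) = γ b := hab
    rcases lt_trichotomy a b with hlt | rfl | hlt
    · rw [max_eq_right hlt.le] at hm
      exact caseA h3 IH hI hf hz γ (fun t => rfl) ha.1 hlt hab' hm
    · exact hf _ hab'
    · rw [max_eq_left hlt.le] at hm
      refine caseA (h := h.symm) h3 IH hI.symm ?_ ?_ γ (fun t => rfl) hb.1 hlt ?_ ?_
      · intro w hw
        rw [Homeomorph.symm_apply_eq] at hw
        exact hf w hw.symm
      · have := (Function.LeftInverse.iterate h.symm_apply_apply n) z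
        rwa [hz] at this
      · rw [← hab', h.symm_apply_apply]
      · intro a' b' h1 h2 h3 h4 he
        rw [Homeomorph.symm_apply_eq] at he
        exact hm b' a' h2 h1 h4 h3 he.symm

end Fr

namespace Fr

/-- integer multiples of `2πi` -/
def per (n : ℤ) : ℂ := n * (2 * Real.pi * Complex.I)

lemma per_add (m n : ℤ) : per (m + n) = per m + per n := by simp [per, add_mul]
lemma per_neg (m : ℤ) : per (-m) = - per m := by simp [per]
lemma per_sub (m n : ℤ) : per (m - n) = per m - per n := by simp [per, sub_mul]
lemma per_zero : per 0 = 0 := by simp [per]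
lemma per_im (n : ℤ) : (per n).im = n * (2 * Real.pi) := by simp [per]
lemma per_inj {m n : ℤ} (h : per m = per n) : m = n := by
  have := congrArg Complex.im h
  rw [per_im, per_im] at this
  have h2 := mul_right_cancel₀ (by positivity) this
  exact_mod_cast h2
lemma exp_per (w : ℂ) (n : ℤ) : Complex.exp (w + per n) = Complex.exp w := by
  rw [Complex.exp_eq_exp_iff_exists_int]; exact ⟨n, rfl⟩
lemma exists_per {w v : ℂ} (h : Complex.exp w = Complex.exp v) : ∃ n : ℤ, w = v + per n := by
  obtain ⟨n, hn⟩ := Complex.exp_eq_exp_iff_exists_int.1 h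
  exact ⟨n, hn⟩

lemma lift_main {f : ℂ ≃ₜ ℂ} (I : HIsotopy f) {z' : ℂ} (hz' : f z' = z') :
    ∃ ft : ℂ ≃ₜ ℂ, (∀ w, Complex.exp (ft w) = f (z' + Complex.exp w) - z') ∧
      (∀ w n, ft (w + per n) = ft w + per n) ∧
      (∀ w, Enlace I (z' + Complex.exp w) z' = (ft w - w).im / (2 * Real.pi)) ∧
      ∀ p : ℤ, Iso (ft.trans (Homeomorph.addRight (- per p))) := by
  have hc := I.cont
  have hcs := I.cont_symm
  have F0 : ∀ x, I.F 0 x = x := fun x => by rw [I.zero]; rfl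
  have F0s : ∀ x, (I.F 0).symm x = x := fun x => by rw [I.zero]; rfl
  have F1 : ∀ x, I.F 1 x = f x := fun x => by rw [I.one]
  have hc1 : ∀ {A : Type} [TopologicalSpace A] {a : A → ℝ} {b : A → ℂ}, Continuous a → Continuous b →
      Continuous (fun x => I.F (a x) (b x)) := fun ha hb => hc.comp (ha.prodMk hb)
  have hc2 : ∀ {A : Type} [TopologicalSpace A] {a : A → ℝ} {b : A → ℂ}, Continuous a → Continuous b →
      Continuous (fun x => (I.F (a x)).symm (b x)) := fun ha hb => hcs.comp (ha.prodMk hb)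
  obtain ⟨G, hG, hG0, hGe⟩ := exists_log (A := ℝ × ℂ)
    (fun p => I.F p.1 (z' + Complex.exp p.2) - I.F p.1 z')
    ((hc1 (by fun_prop) (by fun_prop)).sub (hc1 (by fun_prop) (by fun_prop)))
    (fun p => sub_ne_zero.2 ((I.F p.1).injective.ne (by simp)))
    (0, 0) 0 (by simp [F0])
  obtain ⟨H, hH, hH0, hHe⟩ := exists_log (A := ℝ × ℂ)
    (fun p => (I.F p.1).symm (I.F p.1 z' + Complex.exp p.2) - z')
    ((hc2 (by fun_prop) ((hc1 (by fun_prop) (by fun_prop)).add (by fun_prop))).sub (by fun_prop))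
    (fun p => by
      rw [sub_ne_zero, Ne, Homeomorph.symm_apply_eq]
      simp)
    (0, 0) 0 (by simp [F0, F0s])
  have G0 : ∀ w, G (0, w) = w := by
    intro w
    have := const_of_exp_eq (A := ℂ) isPreconnected_univ (K := fun w => G (0, w)) (L := fun w => w)
      (Continuous.continuousOn (by fun_prop)) (Continuous.continuousOn (by fun_prop))
      (by intro x _; rw [hGe]; simp [F0]) (mem_univ w) (mem_univ 0)
    simp only [hG0, sub_zero] at this
    exact sub_eq_zero.1 this
  have H0 : ∀ w, H (0, w) = w := by
    intro w
    have := const_of_exp_eq (A := ℂ) isPreconnected_univ (K := fun w => H (0, w)) (L := fun w => w)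
      (Continuous.continuousOn (by fun_prop)) (Continuous.continuousOn (by fun_prop))
      (by intro x _; rw [hHe]; simp [F0, F0s]) (mem_univ w) (mem_univ 0)
    simp only [hH0, sub_zero] at this
    exact sub_eq_zero.1 this
  have HG : ∀ t w, H (t, G (t, w)) = w := by
    intro t w
    have := const_of_exp_eq (A := ℝ) isPreconnected_univ (K := fun t => H (t, G (t, w)))
      (L := fun t => w)
      (Continuous.continuousOn (by fun_prop)) (Continuous.continuousOn (by fun_prop))
      (by intro x _; rw [hHe]; simp [hGe]) (mem_univ t) (mem_univ 0)
    simp only [G0, H0, sub_self] at this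
    exact sub_eq_zero.1 this
  have GH : ∀ t w, G (t, H (t, w)) = w := by
    intro t w
    have := const_of_exp_eq (A := ℝ) isPreconnected_univ (K := fun t => G (t, H (t, w)))
      (L := fun t => w)
      (Continuous.continuousOn (by fun_prop)) (Continuous.continuousOn (by fun_prop))
      (by intro x _; rw [hGe]; simp [hHe]) (mem_univ t) (mem_univ 0)
    simp only [G0, H0, sub_self] at this
    exact sub_eq_zero.1 this
  have Gp : ∀ t w n, G (t, w + per n) = G (t, w) + per n := by
    intro t w n
    have := const_of_exp_eq (A := ℝ) isPreconnected_univ (K := fun t => G (t, w + per n))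
      (L := fun t => G (t, w) + per n)
      (Continuous.continuousOn (by fun_prop)) (Continuous.continuousOn (by fun_prop))
      (by intro x _; rw [exp_per, hGe, hGe, exp_per]) (mem_univ t) (mem_univ 0)
    simp only [G0, sub_self] at this
    exact sub_eq_zero.1 this
  let ft : ℂ ≃ₜ ℂ :=
    { toFun := fun w => G (1, w)
      invFun := fun w => H (1, w)
      left_inv := fun w => HG 1 w
      right_inv := fun w => GH 1 w
      continuous_toFun := by fun_prop
      continuous_invFun := by fun_prop }
  have hft : ∀ w, ft w = G (1, w) := fun w => rfl
  refine ⟨ft, ?_, ?_, ?_, ?_⟩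
  · intro w; rw [hft, hGe, F1, F1, hz']
  · intro w n; exact Gp 1 w n
  · intro w
    unfold Enlace
    rw [angVar_eq (L := fun t => G (t, w)) (Continuous.continuousOn (by fun_prop)) (fun t _ => hGe _)]
    rw [G0, hft]
  · intro p
    refine ⟨fun t w => G (t, w) + t * (- per p), by fun_prop, ?_, ?_, ?_⟩
    · intro t x y hxy
      have : G (t, x) = G (t, y) := by simpa using hxy
      have h2 := HG t x
      rw [this, HG] at h2
      exact h2.symm
    · intro w; simp [G0]
    · intro w; simp [hft]

lemma exp_iter {f ft : ℂ ≃ₜ ℂ} {z' : ℂ}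
    (hft : ∀ w, Complex.exp (ft w) = f (z' + Complex.exp w) - z') (n : ℕ) (w : ℂ) :
    z' + Complex.exp ((⇑ft)^[n] w) = (⇑f)^[n] (z' + Complex.exp w) := by
  induction n with
  | zero => rfl
  | succ n ih =>
    rw [Function.iterate_succ_apply', hft, ih, Function.iterate_succ_apply' (⇑f)]
    ring

lemma hp_iter {ft : ℂ ≃ₜ ℂ} (hper : ∀ w n, ft (w + per n) = ft w + per n) (p : ℤ) (n : ℕ) (w : ℂ) (j : ℤ) :
    (⇑(ft.trans (Homeomorph.addRight (- per p))))^[n] (w + per j) = (⇑ft)^[n] w + per (j - n * p) := by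
  induction n with
  | zero => simp
  | succ n ih =>
    rw [Function.iterate_succ_apply', ih, Function.iterate_succ_apply' (⇑ft)]
    simp only [Homeomorph.trans_apply, hper, Homeomorph.coe_addRight]
    rw [add_assoc, ← per_neg, ← per_add]
    congr 2
    push_cast; ring

lemma enlace_sum {f ft : ℂ ≃ₜ ℂ} {I : HIsotopy f} {z' : ℂ}
    (hft : ∀ w, Complex.exp (ft w) = f (z' + Complex.exp w) - z')
    (hen : ∀ w, Enlace I (z' + Complex.exp w) z' = (ft w - w).im / (2 * Real.pi)) (n : ℕ) (w : ℂ) :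
    ∑ r ∈ Finset.range n, Enlace I ((⇑f)^[r] (z' + Complex.exp w)) z'
      = ((⇑ft)^[n] w - w).im / (2 * Real.pi) := by
  induction n with
  | zero => simp
  | succ n ih =>
    rw [Finset.sum_range_succ, ih, ← exp_iter hft, hen, Function.iterate_succ_apply' (⇑ft)]
    simp only [Complex.sub_im]
    ring

lemma cycle {h : ℂ ≃ₜ ℂ} (hI : Iso h) (hf : ∀ z, h z ≠ z) {ι : Type*} (s : Finset ι) (hs : s.Nonempty)
    (V : ι → Set ℂ) (hV : ∀ i ∈ s, IsOpen (V i)) (hc : ∀ i ∈ s, IsPreconnected (V i))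
    (hd : ∀ i ∈ s, ∀ j ∈ s, i ≠ j → Disjoint (V i) (V j))
    (hfree : ∀ i ∈ s, Free h (V i)) (d e : ι → ℂ) (hdV : ∀ i ∈ s, d i ∈ V i) (heV : ∀ i ∈ s, e i ∈ V i)
    (σ : ι → ι) (hσ : ∀ i ∈ s, σ i ∈ s) (τ : ι → ℕ) (hτ : ∀ i ∈ s, 1 ≤ τ i)
    (har : ∀ i ∈ s, (⇑h)^[τ i] (d i) = e (σ i))
    (hmid : ∀ i ∈ s, ∀ k, 1 ≤ k → k < τ i → ∀ j ∈ s, (⇑h)^[k] (d i) ∉ V j) : False := by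
  obtain ⟨φ, k1, k2, k3, k4⟩ := multipush s V e d hV hc hd heV hdV
  have hfp := fpf_comp hf s V hfree k2 k3
  set h' := h.trans φ with hh'
  have step : ∀ i ∈ s, (⇑h')^[τ i] (d i) = d (σ i) := by
    intro i hi
    have key : ∀ k, k < τ i → (⇑h')^[k] (d i) = (⇑h)^[k] (d i) := by
      intro k
      induction k with
      | zero => intro _; rfl
      | succ k ih =>
        intro hk
        rw [Function.iterate_succ_apply', ih (by omega), hh', Homeomorph.trans_apply,
          ← Function.iterate_succ_apply' (⇑h)]
        exact k2 _ (fun j hj => hmid i hi (k+1) (by omega) hk j hj)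
    obtain ⟨k, hk⟩ : ∃ k, τ i = k + 1 := ⟨τ i - 1, by have := hτ i hi; omega⟩
    rw [hk, Function.iterate_succ_apply', key k (by omega), hh', Homeomorph.trans_apply,
        ← Function.iterate_succ_apply' (⇑h), Nat.succ_eq_add_one, ← hk, har i hi]
    exact k4 _ (hσ i hi)
  have hσm : ∀ m, ∀ i ∈ s, σ^[m] i ∈ s := by
    intro m
    induction m with
    | zero => intro i hi; exact hi
    | succ m ih => intro i hi; rw [Function.iterate_succ_apply']; exact hσ _ (ih i hi)
  have multi : ∀ m, ∀ i ∈ s, ∃ N, m ≤ N ∧ (⇑h')^[N] (d i) = d (σ^[m] i) := by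
    intro m
    induction m with
    | zero => intro i hi; exact ⟨0, le_rfl, rfl⟩
    | succ m ih =>
      intro i hi
      obtain ⟨N, hN, e1⟩ := ih i hi
      refine ⟨τ (σ^[m] i) + N, ?_, ?_⟩
      · have := hτ _ (hσm m i hi); omega
      · rw [Function.iterate_add_apply, e1, step _ (hσm m i hi), Function.iterate_succ_apply']
  obtain ⟨i0, hi0⟩ := hs
  obtain ⟨x, y, hxy, hex⟩ := Finite.exists_ne_map_eq_of_infinite
    (fun m : ℕ => (⟨σ^[m] i0, hσm m i0 hi0⟩ : s))
  have hex' : σ^[x] i0 = σ^[y] i0 := congrArg Subtype.val hex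
  have fin : ∀ x y : ℕ, x < y → σ^[x] i0 = σ^[y] i0 → False := by
    intro x y hlt he
    obtain ⟨N, hN, e1⟩ := multi (y - x) _ (hσm x i0 hi0)
    rw [← Function.iterate_add_apply, show y - x + x = y by omega, ← he] at e1
    exact brouwer N (by omega) _ (hI.trans k1) hfp _ e1
  rcases lt_or_gt_of_ne hxy with h1 | h1
  · exact fin x y h1 hex'
  · exact fin y x h1 hex'.symm

end Fr

namespace Fr

structure Dat {f : ℂ ≃ₜ ℂ} (I : HIsotopy f) (U : Set ℂ) (z' : ℂ) (ft : ℂ ≃ₜ ℂ) (L : ℂ → ℂ) : Prop where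
  fpt : f z' = z'
  opn : IsOpen U
  conn : IsPathConnected U
  free : ∀ x ∈ U, f x ∉ U
  hft : ∀ w, Complex.exp (ft w) = f (z' + Complex.exp w) - z'
  hper : ∀ w n, ft (w + per n) = ft w + per n
  hen : ∀ w, Enlace I (z' + Complex.exp w) z' = (ft w - w).im / (2 * Real.pi)
  iso : ∀ p : ℤ, Iso (ft.trans (Homeomorph.addRight (- per p)))
  hL : ContinuousOn L U
  hLe : ∀ x ∈ U, z' + Complex.exp (L x) = x

lemma exists_dat {f : ℂ ≃ₜ ℂ} (I : HIsotopy f) {U : Set ℂ} (hU : FreeDisc f U) {z' : ℂ} (hz' : f z' = z') :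
    ∃ ft L, Dat I U z' ft L := by
  obtain ⟨ft, h1, h2, h3, h4⟩ := lift_main I hz'
  obtain ⟨hUo, ⟨e⟩, hfr⟩ := hU
  have hfree : ∀ x ∈ U, f x ∉ U := fun x hx hx' =>
    Set.disjoint_left.1 hfr (mem_image_of_mem _ hx) hx'
  have hz'U : z' ∉ U := fun h => hfree z' h (by rwa [hz'])
  have : ContractibleSpace U := e.contractibleSpace
  have : LocallyPathConnectedSpace U := hUo.locallyPathConnectedSpace
  have hpc : IsPathConnected U := isPathConnected_iff_pathConnectedSpace.2 inferInstance
  obtain ⟨L, hL, hLe⟩ := exists_log' (A := U) (fun x => (x : ℂ) - z') (by fun_prop)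
    (fun x => sub_ne_zero.2 (fun h => hz'U (h ▸ x.2)))
  refine ⟨ft, fun x => if h : x ∈ U then L ⟨x, h⟩ else 0, ⟨hz', hUo, hpc, hfree, h1, h2, h3, h4, ?_, ?_⟩⟩
  · rw [continuousOn_iff_continuous_domRestrict]
    convert hL using 1
    ext x
    simp
  · intro x hx
    simp [hx, hLe]

section
variable {f : ℂ ≃ₜ ℂ} {I : HIsotopy f} {U : Set ℂ} {z' : ℂ} {ft : ℂ ≃ₜ ℂ} {L : ℂ → ℂ}

lemma Dat.mem_of {D : Dat I U z' ft L} {x : ℂ} {j : ℤ} (hx : x ∈ (fun w => w + per j) '' (L '' U)) :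
    z' + Complex.exp x ∈ U := by
  obtain ⟨_, ⟨u, hu, rfl⟩, rfl⟩ := hx
  simp only [exp_per, D.hLe u hu, hu]

lemma Dat.open_image (D : Dat I U z' ft L) : IsOpen (L '' U) := by
  rw [Metric.isOpen_iff]
  rintro _ ⟨x, hx, rfl⟩
  have hc : Continuous (fun w => z' + Complex.exp w) := by fun_prop
  have ho : IsOpen ((fun w => z' + Complex.exp w) ⁻¹' U) := D.opn.preimage hc
  obtain ⟨r, hr, hb⟩ := Metric.isOpen_iff.1 ho (L x) (by rw [mem_preimage, D.hLe x hx]; exact hx)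
  refine ⟨r, hr, fun w hw => ?_⟩
  refine ⟨z' + Complex.exp w, hb hw, ?_⟩
  have := const_of_exp_eq (S := ball (L x) r) (convex_ball _ _).isPreconnected
    (K := fun w => L (z' + Complex.exp w)) (L := fun w => w)
    (D.hL.comp hc.continuousOn hb) continuousOn_id
    (by
      intro y hy
      have := D.hLe _ (hb hy)
      simpa using this) hw (mem_ball_self hr)
  simp only [D.hLe x hx, sub_self] at this
  exact sub_eq_zero.1 this

lemma Dat.Linj (D : Dat I U z' ft L) {x y : ℂ} (hx : x ∈ U) (hy : y ∈ U) {j k : ℤ}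
    (h : L x + per j = L y + per k) : x = y ∧ j = k := by
  have hxy : x = y := by
    rw [← D.hLe x hx, ← D.hLe y hy, ← exp_per (L x) j, h, exp_per]
  refine ⟨hxy, ?_⟩
  rw [hxy] at h
  exact per_inj (add_left_cancel h)

lemma Dat.iter (D : Dat I U z' ft L) {x : ℂ} (hx : x ∈ U) (n : ℕ) :
    z' + Complex.exp ((⇑ft)^[n] (L x)) = (⇑f)^[n] x := by
  rw [exp_iter D.hft, D.hLe x hx]

lemma Dat.exists_int (D : Dat I U z' ft L) {x : ℂ} (hx : x ∈ U) (n : ℕ) (hn : (⇑f)^[n] x ∈ U) :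
    ∃ m : ℤ, (⇑ft)^[n] (L x) = L ((⇑f)^[n] x) + per m := by
  apply exists_per
  have h1 := D.iter hx n
  have h2 := D.hLe _ hn
  rw [← h2] at h1
  exact add_left_cancel (h1.trans (by rw [h2]))

lemma Dat.sum (D : Dat I U z' ft L) {x : ℂ} (hx : x ∈ U) (n : ℕ) :
    ∑ r ∈ Finset.range n, Enlace I ((⇑f)^[r] x) z' = ((⇑ft)^[n] (L x) - L x).im / (2 * Real.pi) := by
  have := enlace_sum D.hft D.hen n (L x)
  rwa [D.hLe x hx] at this

lemma Dat.fpf (D : Dat I U z' ft L) {M : ℝ}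
    (hM : ∀ z ∈ FixPts ⇑f, ∀ z' ∈ FixPts ⇑f, z ≠ z' → |Enlace I z z'| ≤ M) {p : ℤ} (hp : M < |(p : ℝ)|) :
    ∀ w, (ft.trans (Homeomorph.addRight (- per p))) w ≠ w := by
  intro w hw
  have hw' : ft w = w + per p := by
    have : ft w + - per p = w := hw
    linear_combination this
  have h1 := D.hft w
  rw [hw', exp_per] at h1
  have hfix : f (z' + Complex.exp w) = z' + Complex.exp w := by linear_combination -h1
  have := hM _ hfix z' D.fpt (by simp)
  rw [D.hen, hw', add_sub_cancel_left, per_im, mul_div_assoc, div_self (by positivity), mul_one] at this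
  linarith

lemma Dat.franks (D : Dat I U z' ft L) {p : ℤ}
    (hfp : ∀ w, (ft.trans (Homeomorph.addRight (- per p))) w ≠ w)
    {z w : ℂ} (hz : z ∈ U) (hw : w ∈ U) {k l : ℕ} (hk : 1 ≤ k) (hl : 1 ≤ l)
    (hkz : (⇑f)^[k] z ∈ U) (hlw : (⇑f)^[l] w ∈ U)
    (hkm : ∀ i, 1 ≤ i → i < k → (⇑f)^[i] z ∉ U) (hlm : ∀ i, 1 ≤ i → i < l → (⇑f)^[i] w ∉ U)
    {m n : ℤ} (hm : (⇑ft)^[k] (L z) = L ((⇑f)^[k] z) + per m)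
    (hn : (⇑ft)^[l] (L w) = L ((⇑f)^[l] w) + per n) (ha : m < k * p) (hb : l * p < n) : False := by
  set a : ℤ := k * p - m with hadef
  set b : ℤ := n - l * p with hbdef
  have ha0 : 0 < a := by omega
  have hb0 : 0 < b := by omega
  have hit := hp_iter D.hper p
  refine cycle (D.iso p) hfp (Finset.Ioc (-a) b) ⟨b, by simp; omega⟩
    (fun j => (fun w => w + per j) '' (L '' U)) ?_ ?_ ?_ ?_
    (fun j => if 0 < j then L z + per j else L w + per j)
    (fun j => if j ≤ b - a then L ((⇑f)^[k] z) + per j else L ((⇑f)^[l] w) + per j) ?_ ?_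
    (fun j => if 0 < j then j - a else j + b) ?_ (fun j => if 0 < j then k else l) ?_ ?_ ?_
  · intro j _
    exact (Homeomorph.addRight (per j)).isOpenMap _ D.open_image
  · intro j _
    exact (D.conn.isConnected.isPreconnected.image _ D.hL).image _ (Continuous.continuousOn (by fun_prop))
  · intro i _ j _ hij
    rw [Set.disjoint_left]
    rintro _ ⟨_, ⟨x, hx, rfl⟩, rfl⟩ ⟨_, ⟨y, hy, rfl⟩, e⟩
    exact hij (D.Linj hx hy e.symm).2
  · intro j _
    rintro _ ⟨_, ⟨x, hx, rfl⟩, rfl⟩ hmem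
    have h1 := Dat.mem_of (D := D) hmem
    have h2 := hit 1 (L x) j
    rw [Function.iterate_one] at h2
    simp only at h1
    rw [h2, exp_per, D.iter hx] at h1
    exact D.free x hx h1
  · intro j _
    split_ifs
    · exact ⟨_, ⟨z, hz, rfl⟩, rfl⟩
    · exact ⟨_, ⟨w, hw, rfl⟩, rfl⟩
  · intro j _
    split_ifs
    · exact ⟨_, ⟨_, hkz, rfl⟩, rfl⟩
    · exact ⟨_, ⟨_, hlw, rfl⟩, rfl⟩
  · intro j hj
    simp only [Finset.mem_Ioc] at hj ⊢
    split_ifs <;> omega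
  · intro j _
    split_ifs <;> assumption
  · intro j hj
    simp only [Finset.mem_Ioc] at hj
    by_cases hj0 : 0 < j
    · simp only [hj0, if_true]
      rw [hit, hm, if_pos (by omega), add_assoc, ← per_add]
      congr 2
      omega
    · simp only [hj0, if_false]
      rw [hit, hn, if_neg (by omega), add_assoc, ← per_add]
      congr 2
      omega
  · intro j hj i hi1 hi2 j' _ hmem
    have h1 := Dat.mem_of (D := D) hmem
    by_cases hj0 : 0 < j
    · simp only [hj0, if_true] at h1 hi2
      rw [hit, exp_per, D.iter hz] at h1
      exact hkm i hi1 hi2 h1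
    · simp only [hj0, if_false] at h1 hi2
      rw [hit, exp_per, D.iter hw] at h1
      exact hlm i hi1 hi2 h1

/-- first-return data -/
def Ret (f : ℂ ≃ₜ ℂ) (U : Set ℂ) (z : ℂ) (k : ℕ) : Prop :=
  1 ≤ k ∧ (⇑f)^[k] z ∈ U ∧ ∀ i, 1 ≤ i → i < k → (⇑f)^[i] z ∉ U

lemma ret_of_exists {z : ℂ} (h : ∃ n, 0 < n ∧ (⇑f)^[n] z ∈ U) : Ret f U z (retTime f U z) := by
  have hne : {n : ℕ | 0 < n ∧ (⇑f)^[n] z ∈ U}.Nonempty := h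
  have h1 := Nat.sInf_mem hne
  refine ⟨h1.1, h1.2, fun i hi hlt hmem => ?_⟩
  exact Nat.notMem_of_lt_sInf hlt ⟨hi, hmem⟩

lemma Ret.eq {z : ℂ} {k : ℕ} (h : Ret f U z k) : retTime f U z = k := by
  have h1 := ret_of_exists ⟨k, h.1, h.2.1⟩
  rcases lt_trichotomy (retTime f U z) k with h2 | h2 | h2
  · exact absurd h1.2.1 (h.2.2 _ h1.1 h2)
  · exact h2
  · exact absurd h.2.1 (h1.2.2 _ h.1 h2)

lemma Dat.alpha_eq (D : Dat I U z' ft L) {z : ℂ} (hz : z ∈ U) (hr : (⇑f)^[retTime f U z] z ∈ U) :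
    alphaU I U z' z = (∑ ℓ ∈ Finset.range (retTime f U z), Enlace I ((⇑f)^[ℓ] z) z') +
      ((L z).im - (L ((⇑f)^[retTime f U z] z)).im) / (2 * Real.pi) := by
  unfold alphaU
  congr 1
  have hex : ∃ γ : ℝ → ℂ, IsPathIn U ((⇑f)^[retTime f U z] z) z γ := by
    obtain ⟨γ, hγ⟩ := D.conn.joinedIn _ hr _ hz
    refine ⟨fun t => γ.extend t, γ.continuous_extend.continuousOn, fun t ht => ?_, by simp, by simp⟩
    have := hγ ⟨t, ht⟩
    rw [← Path.extend_apply γ ht] at this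
    exact this
  rw [dif_pos hex]
  obtain ⟨h1, h2, h3, h4⟩ := hex.choose_spec
  have := angVar_eq (γ := fun t => hex.choose t - z') (L := fun t => L (hex.choose t))
    (D.hL.comp h1 h2) (fun t ht => by
      have := D.hLe _ (h2 t ht)
      exact (sub_eq_of_eq_add' this.symm).symm)
  rw [this, h3, h4, Complex.sub_im]

lemma Dat.alpha_int (D : Dat I U z' ft L) {z : ℂ} (hz : z ∈ U) (hr : (⇑f)^[retTime f U z] z ∈ U) :
    ∃ m : ℤ, alphaU I U z' z = m ∧
      (⇑ft)^[retTime f U z] (L z) = L ((⇑f)^[retTime f U z] z) + per m := by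
  obtain ⟨m, hm⟩ := D.exists_int hz _ hr
  refine ⟨m, ?_, hm⟩
  rw [D.alpha_eq hz hr, D.sum hz, hm]
  simp only [Complex.sub_im, Complex.add_im, per_im]
  field_simp
  ring

lemma Dat.bound (D : Dat I U z' ft L) (hP1 : P1 I) :
    ∃ C : ℝ, ∀ z ∈ U, (∃ n, 0 < n ∧ (⇑f)^[n] z ∈ U) → |alphaU I U z' z| ≤ C * retTime f U z := by
  obtain ⟨M, hM⟩ := hP1
  by_cases hex : ∃ z0 ∈ U, ∃ n, 0 < n ∧ (⇑f)^[n] z0 ∈ U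
  · obtain ⟨z0, hz0, hr0⟩ := hex
    have R0 := ret_of_exists hr0
    obtain ⟨m0, hm0, hm0'⟩ := D.alpha_int hz0 R0.2.1
    obtain ⟨p, hp⟩ := exists_nat_gt (max M |(m0 : ℝ)|)
    have hpM : M < p := (le_max_left _ _).trans_lt hp
    have hpm : |(m0 : ℝ)| < p := (le_max_right _ _).trans_lt hp
    have hpm' : |m0| < (p : ℤ) := by exact_mod_cast hpm
    have hp1 : ((p : ℤ) : ℤ) ≤ retTime f U z0 * (p : ℤ) := by
      have : (1 : ℤ) ≤ retTime f U z0 := by exact_mod_cast R0.1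
      nlinarith [Int.natCast_nonneg p]
    refine ⟨p, fun z hz hr => ?_⟩
    have R := ret_of_exists hr
    obtain ⟨m, hm, hm'⟩ := D.alpha_int hz R.2.1
    rw [abs_lt] at hpm'
    have f1 := D.fpf hM (p := (p : ℤ)) (by simpa using hpM)
    have f2 := D.fpf hM (p := -(p : ℤ)) (by simpa using hpM)
    have u1 : m ≤ retTime f U z * (p : ℤ) := by
      by_contra hcon
      push Not at hcon
      exact D.franks f1 hz0 hz R0.1 R.1 R0.2.1 R.2.1 R0.2.2 R.2.2 hm0' hm' (by omega) hcon
    have u2 : retTime f U z * (-(p : ℤ)) ≤ m := by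
      by_contra hcon
      push Not at hcon
      refine D.franks f2 hz hz0 R.1 R0.1 R.2.1 R0.2.1 R.2.2 R0.2.2 hm' hm0' hcon ?_
      rw [mul_neg]
      omega
    rw [hm, abs_le]
    constructor
    · have : ((retTime f U z * (-(p : ℤ)) : ℤ) : ℝ) ≤ m := by exact_mod_cast u2
      push_cast at this
      linarith
    · have : (m : ℝ) ≤ ((retTime f U z * (p : ℤ) : ℤ) : ℝ) := by exact_mod_cast u1
      push_cast at this
      linarith
  · exact ⟨0, fun z hz hr => absurd ⟨z, hz, hr⟩ hex⟩

end

end Fr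

namespace Fr

section birk
variable {α : Type*}

/-- running maximum of Birkhoff sums -/
def Mx (f : α → α) (h : α → ℝ) : ℕ → α → ℝ
  | 0 => fun _ => 0
  | N + 1 => fun x => max 0 (h x + Mx f h N (f x))

lemma Mx_nonneg (f : α → α) (h : α → ℝ) (N : ℕ) (x : α) : 0 ≤ Mx f h N x := by
  cases N with
  | zero => exact le_rfl
  | succ N => exact le_max_left _ _

lemma Mx_succ (f : α → α) (h : α → ℝ) (N : ℕ) : ∀ x, Mx f h N x ≤ Mx f h (N + 1) x := by
  induction N with
  | zero => intro x; exact le_max_left _ _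
  | succ N ih =>
    intro x
    exact max_le_max le_rfl (add_le_add le_rfl (ih (f x)))

lemma sum_le_Mx (f : α → α) (h : α → ℝ) (N : ℕ) : ∀ x, birkhoffSum f h N x ≤ Mx f h N x := by
  induction N with
  | zero => intro x; simp [Mx]
  | succ N ih =>
    intro x
    rw [birkhoffSum_succ']
    exact (add_le_add le_rfl (ih (f x))).trans (le_max_right _ _)

variable [MeasurableSpace α] {μ : Measure α} {f : α → α}

lemma Mx_meas (hf : Measurable f) {h : α → ℝ} (hh : Measurable h) (N : ℕ) : Measurable (Mx f h N) := by
  induction N with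
  | zero => exact measurable_const
  | succ N ih => exact measurable_const.max (hh.add (ih.comp hf))

lemma Mx_int (hf : MeasurePreserving f μ μ) {h : α → ℝ} (hh : Integrable h μ) (N : ℕ) :
    Integrable (Mx f h N) μ := by
  induction N with
  | zero => exact integrable_zero _ _ _
  | succ N ih =>
    exact (integrable_zero _ _ _).sup (hh.add (hf.integrable_comp_of_integrable ih))

lemma maximal (hf : MeasurePreserving f μ μ) {h : α → ℝ} (hm : Measurable h) (hh : Integrable h μ) :
    0 ≤ ∫ x in ⋃ N, {x | 0 < Mx f h N x}, h x ∂μ := by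
  have hmeas : ∀ N, MeasurableSet {x | 0 < Mx f h N x} := fun N =>
    measurableSet_lt measurable_const (Mx_meas hf.measurable hm N)
  have hmono : Monotone fun N => {x | 0 < Mx f h N x} :=
    monotone_nat_of_le_succ fun N x hx => lt_of_lt_of_le hx (Mx_succ f h N x)
  refine ge_of_tendsto' (tendsto_setIntegral_of_monotone hmeas hmono hh.integrableOn) fun N => ?_
  rw [← integral_indicator (hmeas N)]
  have hi := Mx_int hf hh N
  have hi2 : Integrable (fun x => Mx f h N (f x)) μ := hf.integrable_comp_of_integrable hi
  have e : ∫ x, (Mx f h N x - Mx f h N (f x)) ∂μ = 0 := by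
    rw [integral_sub hi hi2, sub_eq_zero]
    have := integral_map (μ := μ) hf.measurable.aemeasurable (f := Mx f h N)
      (Mx_meas hf.measurable hm N).aestronglyMeasurable
    rw [hf.map_eq] at this
    exact this
  refine e.symm.le.trans ?_
  refine integral_mono (hi.sub hi2) (hh.indicator (hmeas N)) ?_
  intro x
  by_cases hx : 0 < Mx f h N x
  · have : ({x | 0 < Mx f h N x}.indicator h) x = h x := indicator_of_mem (s := {x | 0 < Mx f h N x}) (a := x) hx h
    rw [this]
    change Mx f h N x - Mx f h N (f x) ≤ h x
    cases N with
    | zero => exact absurd hx (lt_irrefl _)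
    | succ N =>
      have h1 : Mx f h (N + 1) x = h x + Mx f h N (f x) := by
        have h2 : Mx f h (N + 1) x = max 0 (h x + Mx f h N (f x)) := rfl
        rw [h2] at hx ⊢
        rcases lt_max_iff.1 hx with h3 | h3
        · exact absurd h3 (lt_irrefl _)
        · exact max_eq_right h3.le
      have := Mx_succ f h N (f x)
      linarith
  · have : ({x | 0 < Mx f h N x}.indicator h) x = 0 := indicator_of_notMem (s := {x | 0 < Mx f h N x}) (a := x) hx h
    rw [this]
    have h1 := Mx_nonneg f h N (f x)
    change Mx f h N x - Mx f h N (f x) ≤ 0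
    linarith [not_lt.1 hx]

lemma birk_meas (hf : Measurable f) {h : α → ℝ} (hm : Measurable h) (n : ℕ) :
    Measurable (birkhoffSum f h n) := by
  unfold birkhoffSum
  exact Finset.measurable_fun_sum _ fun i _ => hm.comp (hf.iterate i)

variable [IsFiniteMeasure μ]

lemma unbdd_null (hf : MeasurePreserving f μ μ) {k : α → ℝ} (hm : Measurable k) (hk : Integrable k μ)
    (h0 : ∀ s, MeasurableSet s → f ⁻¹' s = s → ∫ x in s, k x ∂μ = 0) {ε : ℝ} (hε : 0 < ε) :
    μ {x | ∀ K : ℕ, ∃ n, (K : ℝ) < birkhoffSum f (fun x => k x - ε) n x} = 0 := by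
  set h : α → ℝ := fun x => k x - ε with hdef
  set B := {x | ∀ K : ℕ, ∃ n, (K : ℝ) < birkhoffSum f h n x} with hB
  have hhm : Measurable h := hm.sub_const ε
  have hhi : Integrable h μ := hk.sub (integrable_const ε)
  have hBm : MeasurableSet B := by
    have : B = ⋂ K : ℕ, ⋃ n, {x | (K : ℝ) < birkhoffSum f h n x} := by ext; simp [hB]
    rw [this]
    exact MeasurableSet.iInter fun K => MeasurableSet.iUnion fun n =>
      measurableSet_lt measurable_const (birk_meas hf.measurable hhm n)
  have hBi : f ⁻¹' B = B := by
    ext x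
    constructor
    · intro hx K
      obtain ⟨K', hK'⟩ := exists_nat_gt ((K : ℝ) - h x)
      obtain ⟨n, hn⟩ := hx K'
      refine ⟨n + 1, ?_⟩
      rw [birkhoffSum_succ']
      linarith
    · intro hx K
      obtain ⟨K', hK'⟩ := exists_nat_gt ((K : ℝ) + h x)
      obtain ⟨n, hn⟩ := hx K'
      cases n with
      | zero =>
        rw [birkhoffSum_zero] at hn
        exact absurd hn (not_lt.2 (Nat.cast_nonneg _))
      | succ n =>
        refine ⟨n, ?_⟩
        rw [birkhoffSum_succ'] at hn
        linarith
  have hsum : ∀ n, ∀ x ∈ B, birkhoffSum f (B.indicator h) n x = birkhoffSum f h n x := by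
    intro n
    induction n with
    | zero => intro x _; simp
    | succ n ih =>
      intro x hx
      rw [birkhoffSum_succ', birkhoffSum_succ', indicator_of_mem hx, ih (f x)]
      rw [← hBi] at hx; exact hx
  have hmax := maximal hf (hhm.indicator hBm) (hhi.indicator hBm)
  have hsub : B ⊆ ⋃ N, {x | 0 < Mx f (B.indicator h) N x} := by
    intro x hx
    obtain ⟨n, hn⟩ := hx 0
    rw [mem_iUnion]
    refine ⟨n, ?_⟩
    have := sum_le_Mx f (B.indicator h) n x
    rw [hsum n x hx] at this
    simp only [Nat.cast_zero] at hn
    exact hn.trans_le this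
  rw [setIntegral_indicator hBm, inter_eq_self_of_subset_right hsub] at hmax
  rw [hdef, integral_sub hk.integrableOn (integrable_const ε).integrableOn, h0 B hBm hBi, setIntegral_const] at hmax
  have h1 : μ.real B = 0 := by
    have : 0 ≤ μ.real B := measureReal_nonneg
    rw [smul_eq_mul] at hmax
    nlinarith
  rwa [measureReal_eq_zero_iff] at h1

lemma one_side (hf : MeasurePreserving f μ μ) {k : α → ℝ} (hm : Measurable k) (hk : Integrable k μ)
    (h0 : ∀ s, MeasurableSet s → f ⁻¹' s = s → ∫ x in s, k x ∂μ = 0) :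
    ∀ᵐ x ∂μ, ∀ j : ℕ, ∀ᶠ n : ℕ in atTop, birkhoffSum f k n x ≤ 2 * (1 / ((j : ℝ) + 1)) * n := by
  rw [ae_all_iff]
  intro j
  have hε : 0 < 1 / ((j : ℝ) + 1) := by positivity
  set ε := 1 / ((j : ℝ) + 1)
  have := unbdd_null hf hm hk h0 hε
  have hae := measure_eq_zero_iff_ae_notMem.1 this
  filter_upwards [hae] with x hx
  have hx : ¬ ∀ K : ℕ, ∃ n, (K : ℝ) < birkhoffSum f (fun x => k x - ε) n x := hx
  push Not at hx
  obtain ⟨K, hK⟩ := hx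
  obtain ⟨N, hN⟩ := exists_nat_gt ((K : ℝ) / ε)
  rw [div_lt_iff₀ hε] at hN
  filter_upwards [eventually_ge_atTop N] with n hn
  have h1 := hK n
  have h2 : birkhoffSum f (fun x => k x - ε) n x = birkhoffSum f k n x - n * ε := by
    simp [birkhoffSum, Finset.sum_sub_distrib]
  have h3 : (N : ℝ) * ε ≤ n * ε := by gcongr
  rw [h2] at h1
  linarith

theorem birkhoff (hf : MeasurePreserving f μ μ) {g : α → ℝ} (hm : Measurable g) (hg : Integrable g μ) :
    ∃ G : α → ℝ, (∀ x, G (f x) = G x) ∧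
      (∀ s, MeasurableSet s → f ⁻¹' s = s → ∫ x in s, G x ∂μ = ∫ x in s, g x ∂μ) ∧
      ∀ᵐ x ∂μ, Tendsto (fun n : ℕ => (∑ r ∈ Finset.range n, g (f^[r] x)) / n) atTop (𝓝 (G x)) := by
  set G := μ[g | MeasurableSpace.invariants f] with hGdef
  have hle := MeasurableSpace.invariants_le f
  have hGm : Measurable[MeasurableSpace.invariants f] G := stronglyMeasurable_condExp.measurable
  have hGm' : Measurable G := hGm.mono hle le_rfl
  have hGi : Integrable G μ := integrable_condExp
  have hinv : ∀ x, G (f x) = G x := fun x =>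
    congrFun (MeasurableSpace.comp_eq_of_measurable_invariants hGm) x
  have hintg : ∀ s, MeasurableSet s → f ⁻¹' s = s → ∫ x in s, G x ∂μ = ∫ x in s, g x ∂μ :=
    fun s hs hs' => setIntegral_condExp hle hg ⟨hs, hs'⟩
  refine ⟨G, hinv, hintg, ?_⟩
  have a1 := one_side hf (k := fun x => g x - G x) (hm.sub hGm') (hg.sub hGi) (by
    intro s hs hs'
    rw [integral_sub hg.integrableOn hGi.integrableOn, hintg s hs hs', sub_self])
  have a2 := one_side hf (k := fun x => G x - g x) (hGm'.sub hm) (hGi.sub hg) (by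
    intro s hs hs'
    rw [integral_sub hGi.integrableOn hg.integrableOn, hintg s hs hs', sub_self])
  have hGit : ∀ r x, G (f^[r] x) = G x := by
    intro r
    induction r with
    | zero => intro x; rfl
    | succ r ih => intro x; rw [Function.iterate_succ_apply, ih, hinv]
  filter_upwards [a1, a2] with x h1 h2
  rw [Metric.tendsto_atTop']
  intro ε hε
  obtain ⟨j, hj⟩ := exists_nat_one_div_lt (show 0 < ε / 2 by positivity)
  have hev := ((h1 j).and (h2 j)).and (eventually_gt_atTop 0)
  obtain ⟨N, hN⟩ := eventually_atTop.1 hev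
  refine ⟨N, fun n hn => ?_⟩
  obtain ⟨⟨b1, b2⟩, b3⟩ := hN n hn.le
  have hn0 : (0 : ℝ) < n := by exact_mod_cast b3
  have e1 : birkhoffSum f (fun x => g x - G x) n x = ∑ r ∈ Finset.range n, g (f^[r] x) - n * G x := by
    simp [birkhoffSum, Finset.sum_sub_distrib, hGit]
  have e2 : birkhoffSum f (fun x => G x - g x) n x = n * G x - ∑ r ∈ Finset.range n, g (f^[r] x) := by
    simp [birkhoffSum, Finset.sum_sub_distrib, hGit]
  rw [e1] at b1
  rw [e2] at b2
  have hlt : 2 * (1 / ((j : ℝ) + 1)) * n < ε * n := by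
    have : 2 * (1 / ((j : ℝ) + 1)) < ε := by linarith
    gcongr
  rw [Real.dist_eq, abs_lt]
  constructor
  · rw [lt_sub_iff_add_lt, lt_div_iff₀ hn0]; linarith
  · rw [sub_lt_iff_lt_add, div_lt_iff₀ hn0]; linarith

end birk

end Fr

namespace Fr

section
variable {f : ℂ ≃ₜ ℂ} {I : HIsotopy f} {U : Set ℂ} {z' : ℂ} {ft : ℂ ≃ₜ ℂ} {L : ℂ → ℂ}

/-- the local formula for `α` at return time `n` -/
def Afun (f ft : ℂ ≃ₜ ℂ) (U : Set ℂ) (L : ℂ → ℂ) (n : ℕ) : ℂ → ℝ :=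
  (U ∩ (⇑f)^[n] ⁻¹' U).indicator (fun z => ((⇑ft)^[n] (L z) - L ((⇑f)^[n] z)).im / (2 * Real.pi))

/-- `1_U α` -/
def gg (f ft : ℂ ≃ₜ ℂ) (U : Set ℂ) (L : ℂ → ℂ) (z : ℂ) : ℝ := Afun f ft U L (retTime f U z) z

lemma ret_mem {z : ℂ} (hz : z ∈ U) : (⇑f)^[retTime f U z] z ∈ U := by
  by_cases h : ∃ n, 0 < n ∧ (⇑f)^[n] z ∈ U
  · exact (ret_of_exists h).2.1
  · have : {n : ℕ | 0 < n ∧ (⇑f)^[n] z ∈ U} = ∅ := by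
      ext n
      constructor
      · intro hn; exact h ⟨n, hn⟩
      · intro hn; exact absurd hn (notMem_empty _)
    have h0 : retTime f U z = 0 := by unfold retTime; rw [this]; exact Nat.sInf_empty
    rw [h0]; exact hz

lemma gg_of_mem {z : ℂ} (hz : z ∈ U) : gg f ft U L z =
    ((⇑ft)^[retTime f U z] (L z) - L ((⇑f)^[retTime f U z] z)).im / (2 * Real.pi) := by
  unfold gg Afun
  rw [indicator_of_mem (show z ∈ U ∩ (⇑f)^[retTime f U z] ⁻¹' U from ⟨hz, ret_mem hz⟩)]

lemma gg_of_notMem {z : ℂ} (hz : z ∉ U) : gg f ft U L z = 0 := by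
  unfold gg Afun
  rw [indicator_of_notMem]
  exact fun h => hz h.1

lemma Dat.gg_eq (D : Dat I U z' ft L) : gg f ft U L = U.indicator (alphaU I U z') := by
  ext z
  by_cases hz : z ∈ U
  · rw [gg_of_mem hz, indicator_of_mem hz, D.alpha_eq hz (ret_mem hz), D.sum hz]
    simp only [Complex.sub_im]
    ring
  · rw [gg_of_notMem hz, indicator_of_notMem hz]

lemma retTime_meas (hU : IsOpen U) : Measurable (retTime f U) := by
  have hit : ∀ n, Measurable ((⇑f)^[n]) := fun n => (f.continuous.iterate n).measurable
  have hpos : ∀ k : ℕ, 1 ≤ k → MeasurableSet (retTime f U ⁻¹' {k}) := by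
    intro k hk
    have : retTime f U ⁻¹' {k} = (⇑f)^[k] ⁻¹' U ∩ ⋂ i : ℕ, ⋂ (_ : 1 ≤ i ∧ i < k), ((⇑f)^[i] ⁻¹' U)ᶜ := by
      ext z
      simp only [mem_preimage, mem_singleton_iff, mem_inter_iff, mem_iInter, mem_compl_iff]
      constructor
      · intro h
        have hne : ∃ n, 0 < n ∧ (⇑f)^[n] z ∈ U := by
          by_contra hcon
          have : {n : ℕ | 0 < n ∧ (⇑f)^[n] z ∈ U} = ∅ :=
            Set.eq_empty_of_forall_notMem fun n hn => hcon ⟨n, hn⟩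
          have h0 : retTime f U z = 0 := by unfold retTime; rw [this]; exact Nat.sInf_empty
          omega
        have R := ret_of_exists hne
        rw [h] at R
        exact ⟨R.2.1, fun i hi => R.2.2 i hi.1 hi.2⟩
      · rintro ⟨h1, h2⟩
        exact Ret.eq ⟨hk, h1, fun i hi hi' => h2 i ⟨hi, hi'⟩⟩
    rw [this]
    exact (hit k hU.measurableSet).inter (MeasurableSet.iInter fun i => MeasurableSet.iInter fun _ =>
      (hit i hU.measurableSet).compl)
  apply measurable_to_countable'
  intro k
  rcases Nat.eq_zero_or_pos k with rfl | hk
  · have : retTime f U ⁻¹' {0} = (⋃ k : ℕ, retTime f U ⁻¹' {k + 1})ᶜ := by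
      ext z
      simp only [mem_preimage, mem_singleton_iff, mem_compl_iff, mem_iUnion, not_exists]
      constructor
      · intro h k; omega
      · intro h
        by_contra h0
        exact h (retTime f U z - 1) (by omega)
    rw [this]
    exact (MeasurableSet.iUnion fun k => hpos (k + 1) (by omega)).compl
  · exact hpos k hk

lemma Dat.gg_meas (D : Dat I U z' ft L) : Measurable (gg f ft U L) := by
  have hA : ∀ n, Measurable (Afun f ft U L n) := by
    intro n
    have ho : MeasurableSet (U ∩ (⇑f)^[n] ⁻¹' U) :=
      (D.opn.inter (D.opn.preimage (f.continuous.iterate n))).measurableSet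
    unfold Afun
    rw [← piecewise_eq_indicator]
    refine ContinuousOn.measurable_piecewise ?_ continuousOn_const ho
    refine ContinuousOn.div_const (Complex.continuous_im.comp_continuousOn (ContinuousOn.sub ?_ ?_)) _
    · exact (ft.continuous.iterate n).comp_continuousOn (D.hL.mono inter_subset_left)
    · exact D.hL.comp (f.continuous.iterate n).continuousOn (fun x hx => hx.2)
  have h2 : Measurable (fun p : ℕ × ℂ => Afun f ft U L p.1 p.2) :=
    measurable_from_prod_countable_right hA
  exact h2.comp ((retTime_meas D.opn).prodMk measurable_id)

lemma mp_iter {ν : Measure ℂ} (hinv : Measure.map (⇑f) ν = ν) (n : ℕ) :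
    MeasurePreserving ((⇑f)^[n]) ν ν :=
  MeasurePreserving.iterate ⟨f.continuous.measurable, hinv⟩ n

lemma kac {ν : Measure ℂ} (hinv : Measure.map (⇑f) ν = ν) (hU : IsOpen U) :
    ∫⁻ z in U, (retTime f U z : ENNReal) ∂ν ≤ ν univ := by
  have hm := retTime_meas (f := f) hU
  let S : ℕ → Set ℂ := fun n => U ∩ {z | n < retTime f U z}
  have hS : ∀ n, MeasurableSet (S n) := fun n =>
    hU.measurableSet.inter (measurableSet_lt measurable_const hm)
  have himg : ∀ n, MeasurableSet ((⇑f)^[n] '' S n) := by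
    intro n
    have : (⇑f)^[n] '' S n = (⇑f.symm)^[n] ⁻¹' S n :=
      congrFun (image_eq_preimage_of_inverse (Function.LeftInverse.iterate f.symm_apply_apply n)
        (Function.LeftInverse.iterate f.apply_symm_apply n)) (S n)
    rw [this]
    exact (f.symm.continuous.iterate n).measurable (hS n)
  have hmeq : ∀ n, ν ((⇑f)^[n] '' S n) = ν (S n) := by
    intro n
    rw [← (mp_iter hinv n).measure_preimage (himg n).nullMeasurableSet,
      preimage_image_eq _ (f.injective.iterate n)]
  have hcase : ∀ n m, n < m → Disjoint ((⇑f)^[n] '' S n) ((⇑f)^[m] '' S m) := by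
    intro n m hnm
    rw [Set.disjoint_left]
    rintro _ ⟨x, hx, rfl⟩ ⟨y, hy, e⟩
    obtain ⟨d, rfl⟩ : ∃ d, m = n + d := ⟨m - n, by omega⟩
    rw [Function.iterate_add_apply] at e
    have e' := f.injective.iterate n e
    have h1 : (⇑f)^[d] y ∈ U := by rw [e']; exact hx.1
    have h2 : retTime f U y ≤ d := Nat.sInf_le ⟨by omega, h1⟩
    have h3 : n + d < retTime f U y := hy.2
    omega
  have hdisj : Pairwise (Function.onFun Disjoint fun n => (⇑f)^[n] '' S n) := by
    intro n m hnm
    rcases lt_or_gt_of_ne hnm with h | h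
    · exact hcase n m h
    · exact (hcase m n h).symm
  have hpt : ∀ k : ℕ, (k : ENNReal) = ∑' n : ℕ, if n < k then (1 : ENNReal) else 0 := by
    intro k
    rw [tsum_eq_sum (s := Finset.range k) (by intro b hb; simp at hb; simp [hb])]
    rw [Finset.sum_congr rfl (g := fun _ => (1 : ENNReal)) (by intro x hx; simp at hx; simp [hx])]
    simp
  calc ∫⁻ z in U, (retTime f U z : ENNReal) ∂ν
      = ∫⁻ z in U, ∑' n : ℕ, {z | n < retTime f U z}.indicator (fun _ => (1 : ENNReal)) z ∂ν := by
        congr 1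
        ext z
        rw [hpt]
        refine tsum_congr fun n => ?_
        by_cases h : n < retTime f U z
        · rw [if_pos h, indicator_of_mem (show z ∈ {z | n < retTime f U z} from h)]
        · rw [if_neg h, indicator_of_notMem (show z ∉ {z | n < retTime f U z} from h)]
    _ = ∑' n : ℕ, ∫⁻ z in U, {z | n < retTime f U z}.indicator (fun _ => (1 : ENNReal)) z ∂ν := by
        apply lintegral_tsum
        intro n
        exact (measurable_const.indicator (measurableSet_lt measurable_const hm)).aemeasurable
    _ = ∑' n : ℕ, ν (S n) := by
        congr 1
        ext n
        rw [lintegral_indicator (measurableSet_lt measurable_const hm), setLIntegral_one,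
          Measure.restrict_apply (measurableSet_lt measurable_const hm), inter_comm]
    _ = ∑' n : ℕ, ν ((⇑f)^[n] '' S n) := by simp only [hmeq]
    _ = ν (⋃ n, (⇑f)^[n] '' S n) := (measure_iUnion hdisj himg).symm
    _ ≤ ν univ := measure_mono (subset_univ _)

lemma Dat.gg_int (D : Dat I U z' ft L) (hP1 : P1 I) {ν : Measure ℂ} [IsFiniteMeasure ν]
    (hinv : Measure.map (⇑f) ν = ν) : Integrable (gg f ft U L) ν := by
  obtain ⟨C, hC⟩ := D.bound hP1
  have hτ : Integrable (U.indicator fun z => (retTime f U z : ℝ)) ν := by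
    rw [integrable_indicator_iff D.opn.measurableSet]
    refine ⟨(measurable_from_nat.comp (retTime_meas D.opn)).aestronglyMeasurable, ?_⟩
    rw [hasFiniteIntegral_iff_enorm]
    refine lt_of_le_of_lt ?_ (lt_of_le_of_lt (kac hinv D.opn) (measure_lt_top ν univ))
    apply lintegral_mono
    intro z
    simp
  refine (hτ.const_mul C).mono' D.gg_meas.aestronglyMeasurable (Eventually.of_forall fun z => ?_)
  rw [D.gg_eq]
  by_cases hz : z ∈ U
  · rw [indicator_of_mem hz, indicator_of_mem hz]
    by_cases h : ∃ n, 0 < n ∧ (⇑f)^[n] z ∈ U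
    · exact hC z hz h
    · have h0 : retTime f U z = 0 := by
        have : {n : ℕ | 0 < n ∧ (⇑f)^[n] z ∈ U} = ∅ :=
          Set.eq_empty_of_forall_notMem fun n hn => h ⟨n, hn⟩
        unfold retTime; rw [this]; exact Nat.sInf_empty
      have := D.alpha_eq hz (ret_mem hz)
      rw [this, h0]
      simp
  · rw [indicator_of_notMem hz, indicator_of_notMem hz]; simp

lemma Dat.iter_per (D : Dat I U z' ft L) (n : ℕ) (w : ℂ) (m : ℤ) :
    (⇑ft)^[n] (w + per m) = (⇑ft)^[n] w + per m := by
  induction n with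
  | zero => rfl
  | succ n ih => rw [Function.iterate_succ_apply', ih, D.hper, Function.iterate_succ_apply' (⇑ft)]

lemma Dat.key_sum (D : Dat I U z' ft L) : ∀ n : ℕ, ∀ w ∈ U, (⇑f)^[n] w ∈ U →
    ∑ r ∈ Finset.range n, gg f ft U L ((⇑f)^[r] w)
      = ((⇑ft)^[n] (L w) - L ((⇑f)^[n] w)).im / (2 * Real.pi) := by
  intro n
  induction n using Nat.strong_induction_on with
  | _ n ih =>
  intro w hw hn
  rcases Nat.eq_zero_or_pos n with rfl | hpos
  · simp
  · have R := ret_of_exists (f := f) (U := U) ⟨n, hpos, hn⟩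
    have hle : retTime f U w ≤ n := Nat.sInf_le ⟨hpos, hn⟩
    have hgw := gg_of_mem (f := f) (ft := ft) (L := L) hw
    set t := retTime f U w with ht
    obtain ⟨d, rfl⟩ : ∃ d, n = t + d := ⟨n - t, by omega⟩
    have hn' : (⇑f)^[d] ((⇑f)^[t] w) = (⇑f)^[t + d] w := by
      rw [← Function.iterate_add_apply, add_comm]
    have h1 := ih d (by have := R.1; omega) _ R.2.1 (by rw [hn']; exact hn)
    obtain ⟨m, hm⟩ := D.exists_int hw t R.2.1
    rw [Finset.sum_range_add]
    have h2 : ∑ r ∈ Finset.range t, gg f ft U L ((⇑f)^[r] w) = gg f ft U L w := by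
      rw [Finset.sum_eq_single_of_mem 0 (Finset.mem_range.2 R.1)]
      · rfl
      · intro b hb hb0
        exact gg_of_notMem (R.2.2 b (by omega) (Finset.mem_range.1 hb))
    have h3 : ∑ r ∈ Finset.range d, gg f ft U L ((⇑f)^[t + r] w)
        = ∑ r ∈ Finset.range d, gg f ft U L ((⇑f)^[r] ((⇑f)^[t] w)) := by
      apply Finset.sum_congr rfl
      intro r _
      rw [← Function.iterate_add_apply, add_comm]
    have h4 : (⇑ft)^[t + d] (L w) = (⇑ft)^[d] (L ((⇑f)^[t] w)) + per m := by
      rw [add_comm, Function.iterate_add_apply, hm, D.iter_per]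
    rw [h2, h3, h1, hgw, h4, hm, hn']
    simp only [Complex.sub_im, Complex.add_im]
    ring

lemma Dat.sum_shift (D : Dat I U z' ft L) {w : ℂ} (hw : w ∈ U) (k n : ℕ) (hn : (⇑f)^[n] w ∈ U) :
    ∑ r ∈ Finset.range n, Enlace I ((⇑f)^[r] ((⇑f)^[k] w)) z' =
      ∑ r ∈ Finset.range n, gg f ft U L ((⇑f)^[r] w) +
      ((⇑ft)^[k] (L ((⇑f)^[n] w)) - (⇑ft)^[k] (L w)).im / (2 * Real.pi) := by
  have h1 := enlace_sum D.hft D.hen n ((⇑ft)^[k] (L w))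
  rw [D.iter hw] at h1
  obtain ⟨m, hm⟩ := D.exists_int hw n hn
  rw [h1, D.key_sum n w hw hn, ← Function.iterate_add_apply, add_comm n k,
    Function.iterate_add_apply, hm, D.iter_per]
  simp only [Complex.sub_im, Complex.add_im]
  ring

lemma Dat.hasRot (D : Dat I U z' ft L) {w : ℂ} (hw : w ∈ U) (k : ℕ) {ρ : ℝ}
    (hρ : Tendsto (fun n : ℕ => (∑ r ∈ Finset.range n, gg f ft U L ((⇑f)^[r] w)) / n) atTop (𝓝 ρ)) :
    HasRot I z' ((⇑f)^[k] w) ρ := by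
  intro n hn hlim
  have hcomm : ∀ m, (⇑f)^[m] w = (⇑f.symm)^[k] ((⇑f)^[m] ((⇑f)^[k] w)) := by
    intro m
    rw [← Function.iterate_add_apply, add_comm, Function.iterate_add_apply]
    exact (Function.LeftInverse.iterate f.symm_apply_apply k _).symm
  have hlimw : Tendsto (fun j => (⇑f)^[n j] w) atTop (𝓝 w) := by
    have h1 := ((f.symm.continuous.iterate k).tendsto ((⇑f)^[k] w)).comp hlim
    have h2 : (⇑f.symm)^[k] ((⇑f)^[k] w) = w := Function.LeftInverse.iterate f.symm_apply_apply k _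
    rw [h2] at h1
    exact h1.congr fun j => (hcomm (n j)).symm
  have hevU : ∀ᶠ j in atTop, (⇑f)^[n j] w ∈ U := hlimw (D.opn.mem_nhds hw)
  have hLlim : Tendsto (fun j => ((⇑ft)^[k] (L ((⇑f)^[n j] w)) - (⇑ft)^[k] (L w)).im / (2 * Real.pi))
      atTop (𝓝 0) := by
    have hc : ContinuousAt (fun x => ((⇑ft)^[k] (L x) - (⇑ft)^[k] (L w)).im / (2 * Real.pi)) w := by
      have hLc : ContinuousAt L w := D.hL.continuousAt (D.opn.mem_nhds hw)
      have h1 : ContinuousAt (fun x => (⇑ft)^[k] (L x)) w :=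
        (ft.continuous.iterate k).continuousAt.comp hLc
      exact (Complex.continuous_im.continuousAt.comp (h1.sub continuousAt_const)).div_const _
    have := hc.tendsto.comp hlimw
    simp only [sub_self, Complex.zero_im, zero_div] at this
    exact this
  have hnt : Tendsto (fun j => (n j : ℝ)) atTop atTop :=
    tendsto_natCast_atTop_atTop.comp hn.tendsto_atTop
  have h1 := (hρ.comp hn.tendsto_atTop).add (hLlim.div_atTop hnt)
  rw [add_zero] at h1
  refine h1.congr' ?_
  filter_upwards [hevU] with j hj
  rw [D.sum_shift hw k (n j) hj, add_div]
  rfl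

end

lemma rho_eq {f : ℂ ≃ₜ ℂ} {I : HIsotopy f} {z' z : ℂ} {ρ : ℝ} (h : HasRot I z' z ρ) (hr : z ∈ RecPlus f) :
    rho I z' z = ρ := by
  have hex : ∃ ρ : ℝ, HasRot I z' z ρ := ⟨ρ, h⟩
  unfold rho
  rw [dif_pos hex]
  obtain ⟨n, hn, hl⟩ := hr
  exact tendsto_nhds_unique (hex.choose_spec n hn hl) (h n hn hl)

lemma main_thm (f : ℂ ≃ₜ ℂ) (I : HIsotopy f) (hP1 : P1 I)
    (ν : Measure ℂ) [IsFiniteMeasure ν] (hinv : Measure.map (⇑f) ν = ν)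
    (U : Set ℂ) (hU : FreeDisc f U)
    (z' : ℂ) (hz' : z' ∈ FixPts ⇑f) :
    (∀ᵐ zz ∂(ν.restrict (⋃ k : ℕ, (⇑f)^[k] '' U)), ∃ ρ : ℝ, HasRot I z' zz ρ) ∧
      ∫ zz in ⋃ k : ℕ, (⇑f)^[k] '' U, rho I z' zz ∂ν
        = ∫ zz in U, alphaU I U z' zz ∂ν := by
  obtain ⟨ft, L, D⟩ := exists_dat I hU (z' := z') hz'
  have hmp : MeasurePreserving (⇑f) ν ν := ⟨f.continuous.measurable, hinv⟩
  have hmps : MeasurePreserving (⇑f.symm) ν ν := by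
    have := MeasurePreserving.symm f.toMeasurableEquiv hmp
    exact this
  obtain ⟨G, hG1, hG2, hG3⟩ := birkhoff hmp D.gg_meas (D.gg_int hP1 hinv)
  have hGit : ∀ k x, G ((⇑f)^[k] x) = G x := by
    intro k
    induction k with
    | zero => intro x; rfl
    | succ k ih => intro x; rw [Function.iterate_succ_apply, ih, hG1]
  set X : Set ℂ := ⋃ k : ℕ, (⇑f)^[k] '' U with hX
  have hXm : MeasurableSet X := (isOpen_iUnion fun k => isOpen_iter D.opn k).measurableSet
  -- Has rotation number almost everywhere
  have hgood : ∀ᵐ z ∂ν, ∀ k : ℕ, Tendsto (fun n : ℕ =>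
      (∑ r ∈ Finset.range n, gg f ft U L ((⇑f)^[r] ((⇑f.symm)^[k] z))) / n) atTop
      (𝓝 (G ((⇑f.symm)^[k] z))) := by
    rw [ae_all_iff]
    intro k
    exact (hmps.iterate k).quasiMeasurePreserving.ae hG3
  have hrot : ∀ᵐ z ∂(ν.restrict X), HasRot I z' z (G z) := by
    rw [ae_restrict_iff' hXm]
    filter_upwards [hgood] with z hz hzX
    obtain ⟨k, w, hw, rfl⟩ := mem_iUnion.1 hzX
    have h1 := hz k
    have h2 : (⇑f.symm)^[k] ((⇑f)^[k] w) = w := Function.LeftInverse.iterate f.symm_apply_apply k _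
    rw [h2] at h1
    rw [hGit]
    exact D.hasRot hw k h1
  refine ⟨hrot.mono fun z hz => ⟨_, hz⟩, ?_⟩
  have hrec : ∀ᵐ z ∂ν, z ∈ RecPlus f := by
    filter_upwards [hmp.conservative.ae_frequently_mem_of_mem_nhds] with z hz
    have hcl : MapClusterPt z atTop (fun n => (⇑f)^[n] z) := by
      rw [mapClusterPt_iff_frequently]
      exact hz
    obtain ⟨ψ, h1, h2⟩ := TopologicalSpace.FirstCountableTopology.tendsto_subseq hcl
    exact ⟨ψ, h1, h2⟩
  have e1 : ∫ z in X, rho I z' z ∂ν = ∫ z in X, G z ∂ν := by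
    apply integral_congr_ae
    filter_upwards [hrot, ae_restrict_of_ae hrec] with z h1 h2
    exact rho_eq h1 h2
  -- invariant saturation
  have hXf : ∀ x ∈ X, f x ∈ X := by
    intro x hx
    obtain ⟨k, w, hw, rfl⟩ := mem_iUnion.1 hx
    exact mem_iUnion.2 ⟨k + 1, w, hw, Function.iterate_succ_apply' _ _ _⟩
  have hXfn : ∀ n, ∀ x ∈ X, (⇑f)^[n] x ∈ X := by
    intro n
    induction n with
    | zero => intro x hx; exact hx
    | succ n ih => intro x hx; exact ih _ (hXf x hx)
  set Z : Set ℂ := ⋃ n : ℕ, (⇑f)^[n] ⁻¹' X with hZ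
  have hZm : MeasurableSet Z := MeasurableSet.iUnion fun n => (mp_iter hinv n).measurable hXm
  have hZi : (⇑f) ⁻¹' Z = Z := by
    ext x
    constructor
    · intro hx
      obtain ⟨n, hn⟩ := mem_iUnion.1 hx
      exact mem_iUnion.2 ⟨n + 1, hn⟩
    · intro hx
      obtain ⟨n, hn⟩ := mem_iUnion.1 hx
      refine mem_iUnion.2 ⟨n, ?_⟩
      have h1 := hXf _ hn
      rw [← Function.iterate_succ_apply' (⇑f)] at h1
      exact h1
  have hXZ : X ⊆ Z := fun x hx => mem_iUnion.2 ⟨0, hx⟩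
  have hZX : Z =ᵐ[ν] X := by
    have hn : ∀ n : ℕ, ν ((⇑f)^[n] ⁻¹' X \ X) = 0 := by
      intro n
      have hs : X ⊆ (⇑f)^[n] ⁻¹' X := fun x hx => hXfn n x hx
      rw [measure_sdiff hs hXm.nullMeasurableSet (measure_ne_top _ _),
        (mp_iter hinv n).measure_preimage hXm.nullMeasurableSet, tsub_self]
    have h0 : ν (Z \ X) = 0 := by
      rw [hZ, iUnion_sdiff]
      exact measure_iUnion_null hn
    refine Filter.EventuallyLE.antisymm ?_ (Eventually.of_forall fun x hx => hXZ hx)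
    exact ae_le_set.2 h0
  have hUZ : U ⊆ Z := fun x hx => hXZ (mem_iUnion.2 ⟨0, x, hx, rfl⟩)
  rw [e1, ← setIntegral_congr_set hZX, hG2 Z hZm hZi, D.gg_eq, setIntegral_indicator D.opn.measurableSet,
    inter_eq_self_of_subset_right hUZ]

end Fr

theorem stmt15_integral_rho_eq_integral_alpha
    (f : ℂ ≃ₜ ℂ) (I : HIsotopy f) (hP1 : P1 I) (hP2 : P2 I)
    (hnc : ¬ IsCompact (FixPts ⇑f)) (hA : Adapted I)
    (ν : Measure ℂ) [IsFiniteMeasure ν] (hinv : Measure.map (⇑f) ν = ν)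
    (U : Set ℂ) (hU : FreeDisc f U)
    (z' : ℂ) (hz' : z' ∈ FixPts ⇑f) :
    (∀ᵐ zz ∂(ν.restrict (⋃ k : ℕ, (⇑f)^[k] '' U)), ∃ ρ : ℝ, HasRot I z' zz ρ) ∧
      ∫ zz in ⋃ k : ℕ, (⇑f)^[k] '' U, rho I z' zz ∂ν
        = ∫ zz in U, alphaU I U z' zz ∂ν := by
  exact Fr.main_thm f I hP1 ν hinv U hU z' hz'

end
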